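/- arXiv:2311.10103 — 3 statements merged into one kernel-verified Lean document; each statement's English description precedes it below -/
import Mathlib

section
/- Let Φ be a Young function such that Φ and its conjugate Φ̃ are of class Δ₂, assume ℳ is countably generated modulo μ-null sets, let {T(x)}_{x∈ℝ^N} be an N-dimensional dynamical system on Ω, let (ε_k) ⊆ (0,1] with ε_k → 0, and let (u_k) be a sequence of measurable functions on Q×Ω, extended by 0 to ℝ^N×Ω, with sup_k ‖u_k‖_{Φ,Q×Ω} < ∞, which weakly stochastically 2-scale converges to u₀. Fix r > 0 and let B_s denote the open Euclidean ball of ℝ^N of radius s centered at the origin, |B_s| its Lebesgue measure. Then the sequence w_k(x,ω) = (1/|B_{ε_k²r}|) ∫_{B_{ε_k²r}} u_k(x+ρ, ω) dρ weakly stochastically 2-scale converges to (1/|B_r|) v₀, where v₀(x,ω,y) = ∫_{B_r} u₀(x, ω, y+ρ) dρ. -/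
open MeasureTheory Filter Topology ENNReal

noncomputable section

/-- Euclidean norm on `Fin N → ℝ`. -/
def enorm2 {N : ℕ} (v : Fin N → ℝ) : ℝ := Real.sqrt (∑ i, v i ^ 2)

/-- `Φ : [0,∞) → [0,∞)` is a Young function: continuous, convex, positive on `(0,∞)`,
with `Φ(t)/t → 0` as `t → 0⁺` and `Φ(t)/t → ∞` as `t → ∞` (so `Φ(0) = 0`). -/
def IsYoung (Φ : ℝ → ℝ) : Prop :=
  ContinuousOn Φ (Set.Ici 0) ∧ ConvexOn ℝ (Set.Ici 0) Φ ∧ Φ 0 = 0 ∧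
    (∀ t : ℝ, 0 < t → 0 < Φ t) ∧ (∀ t : ℝ, 0 ≤ t → 0 ≤ Φ t) ∧
    Tendsto (fun t => Φ t / t) (nhdsWithin 0 (Set.Ioi 0)) (nhds 0) ∧
    Tendsto (fun t => Φ t / t) atTop atTop

/-- The `Δ₂`-condition (at infinity). -/
def Delta2 (Φ : ℝ → ℝ) : Prop :=
  ∃ α : ℝ, 0 < α ∧ ∃ t₀ : ℝ, 0 ≤ t₀ ∧ ∀ t : ℝ, t₀ ≤ t → Φ (2 * t) ≤ α * Φ t

/-- The `Δ'`-condition (at infinity). -/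
def DeltaPrime (Φ : ℝ → ℝ) : Prop :=
  ∃ k : ℝ, 0 < k ∧ ∃ t₀ s₀ : ℝ, 0 ≤ t₀ ∧ 0 ≤ s₀ ∧
    ∀ t s : ℝ, t₀ ≤ t → s₀ ≤ s → Φ (t * s) ≤ k * Φ t * Φ s

/-- The conjugate Young function `Φ̃(t) = sup_{s ≥ 0} (st − Φ(s))`. -/
def conjY (Φ : ℝ → ℝ) (t : ℝ) : ℝ := sSup ((fun s => s * t - Φ s) '' Set.Ici 0)

/-- The Luxemburg norm `‖u‖_{Φ,X} = inf {δ > 0 : ∫_X Φ(|u|/δ) dν ≤ 1}` (`+∞` if no such `δ`). -/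
def luxNorm {X : Type*} [MeasurableSpace X] (Φ : ℝ → ℝ) (ν : Measure X) (u : X → ℝ) : ℝ≥0∞ :=
  sInf {d : ℝ≥0∞ | ∃ δ : ℝ, 0 < δ ∧ d = ENNReal.ofReal δ ∧
    (∫⁻ x, ENNReal.ofReal (Φ (|u x| / δ)) ∂ν) ≤ 1}

/-- An `N`-dimensional dynamical system on `Ω` preserving `μ`. -/
def IsDynSys {N : ℕ} {Ω : Type*} [MeasurableSpace Ω] (μ : Measure Ω)
    (T : (Fin N → ℝ) → Ω → Ω) : Prop :=
  T 0 = id ∧ (∀ x y : Fin N → ℝ, T (x + y) = T x ∘ T y) ∧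
    (∀ x : Fin N → ℝ, MeasurePreserving (T x) μ μ) ∧
    Measurable fun p : (Fin N → ℝ) × Ω => T p.1 p.2

/-- `ℤ^N`-periodicity. -/
def ZPeriodic {N : ℕ} (g : (Fin N → ℝ) → ℝ) : Prop :=
  ∀ (y : Fin N → ℝ) (k : Fin N → ℤ), g (y + fun i => (k i : ℝ)) = g y

/-- The unit cube `Y = [0,1]^N`. -/
def Ycube (N : ℕ) : Set (Fin N → ℝ) := Set.Icc 0 1

/-- `ℳ` is countably generated modulo `μ`-null sets. -/
def CountGenModNull {Ω : Type*} [MeasurableSpace Ω] (μ : Measure Ω) : Prop :=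
  ∃ S : ℕ → Set Ω, (∀ n, MeasurableSet (S n)) ∧
    ∀ A : Set Ω, MeasurableSet A →
      ∃ B : Set Ω, MeasurableSet[MeasurableSpace.generateFrom (Set.range S)] B ∧
        μ (symmDiff A B) = 0

/-- Weak stochastic two-scale convergence of `(u k)` to `u₀` along the sequence `(ε k)`. -/
def WeakStoch2Scale {N : ℕ} {Ω : Type*} [MeasurableSpace Ω] (μ : Measure Ω)
    (T : (Fin N → ℝ) → Ω → Ω) (Q : Set (Fin N → ℝ)) (ε : ℕ → ℝ)
    (u : ℕ → (Fin N → ℝ) → Ω → ℝ) (u₀ : (Fin N → ℝ) → Ω → (Fin N → ℝ) → ℝ) : Prop :=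
  ∀ φ : (Fin N → ℝ) → ℝ, ContDiff ℝ (⊤ : ℕ∞) φ → HasCompactSupport φ → tsupport φ ⊆ Q →
    ∀ ψ : Ω → ℝ, Measurable ψ → (∃ C : ℝ, ∀ ω, |ψ ω| ≤ C) →
      ∀ g : (Fin N → ℝ) → ℝ, Continuous g → ZPeriodic g →
        Tendsto
          (fun k => ∫ x in Q, (∫ ω, u k x ω * φ x * ψ (T ((ε k)⁻¹ • x) ω) *
              g (((ε k) ^ 2)⁻¹ • x) ∂μ))
          atTop
          (nhds (∫ x in Q, (∫ ω, (∫ y in Ycube N, u₀ x ω y * φ x * ψ ω * g y) ∂μ)))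

/-!
Replace the normalized ball by an arbitrary finite measure `ν`: rescaling `ρ = ε² s` turns `w_k`
into `∫ u_k(x + ε² s, ω) dν(s)`. Translation invariance moves the average onto the test function,
which becomes `∫ h(x - ε² s, T(x/ε - ε s)ω) g(x/ε² - s) dν(s)` with `h(x, ω) = φ(x) ψ(ω)`. The
periodic variable is displaced by the fixed vector `s`, but `(x, ω)` only by `(-ε² s, -ε s)` under
the measure-preserving action of `ℝ^N × ℝ^N` on `ℝ^N × Ω`, which is strongly continuous on `L¹`.
Hence the averaged test function differs from the admissible one with `g` replaced by
`G(y) = ∫ g(y - s) dν(s)` by a bounded remainder vanishing in `L¹`. The superlinear growth of `Φ`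
makes `(u_k)` uniformly integrable, so the remainder does not contribute to the limit, and moving
the average from `G` back to `u₀` on the torus identifies the limit.
-/

section Luxemburg

variable {X ι : Type*} [MeasurableSpace X] {ν : Measure X} {Φ : ℝ → ℝ}

lemma IsYoung.monotoneOn (hΦ : IsYoung Φ) : MonotoneOn Φ (Set.Ici 0) := by
  obtain ⟨-, hconv, hzero, -, hnonneg, -⟩ := hΦ
  intro s hs t ht hst
  rcases (Set.mem_Ici.1 ht).eq_or_lt with rfl | htpos
  · rw [le_antisymm hst hs]
  have hratio : s / t ≤ 1 := div_le_one_of_le₀ hst ht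
  calc Φ s = Φ ((1 - s / t) • 0 + (s / t) • t) := by
        rw [smul_zero, zero_add, smul_eq_mul, div_mul_cancel₀ _ htpos.ne']
    _ ≤ (1 - s / t) • Φ 0 + (s / t) • Φ t :=
        hconv.2 Set.self_mem_Ici ht (sub_nonneg.2 hratio) (div_nonneg hs ht) (sub_add_cancel _ _)
    _ = s / t * Φ t := by rw [hzero, smul_zero, zero_add, smul_eq_mul]
    _ ≤ Φ t := mul_le_of_le_one_left (hnonneg t ht) hratio

lemma IsYoung.eventually_le_mul (hΦ : IsYoung Φ) {δ η : ℝ} (hδ : 0 < δ) (hη : 0 < η) :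
    ∀ᶠ t in atTop, t ≤ η * Φ (t / δ) := by
  obtain ⟨-, -, -, -, -, -, hsuperlinear⟩ := hΦ
  have hdiv : Tendsto (fun t : ℝ => t / δ) atTop atTop := tendsto_id.atTop_div_const hδ
  filter_upwards [(hsuperlinear.comp hdiv).eventually_ge_atTop (δ / η), eventually_gt_atTop 0]
    with t ht htpos
  calc t = η * (δ / η * (t / δ)) := by field_simp
    _ ≤ η * Φ (t / δ) := by
        gcongr
        exact (le_div_iff₀ (div_pos htpos hδ)).1 ht

lemma lintegral_le_one_of_luxNorm_lt (hΦ : MonotoneOn Φ (Set.Ici 0)) {u : X → ℝ} {δ : ℝ}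
    (h : luxNorm Φ ν u < ENNReal.ofReal δ) :
    ∫⁻ x, ENNReal.ofReal (Φ (|u x| / δ)) ∂ν ≤ 1 := by
  obtain ⟨_, ⟨δ', hδ', rfl, hle⟩, hlt⟩ := sInf_lt_iff.1 h
  have hδ : δ' < δ := (ENNReal.ofReal_lt_ofReal_iff_of_nonneg hδ'.le).1 hlt
  refine (lintegral_mono fun x => ENNReal.ofReal_le_ofReal ?_).trans hle
  refine hΦ ?_ ?_ (by gcongr)
  · exact div_nonneg (abs_nonneg _) (hδ'.trans hδ).le
  · exact div_nonneg (abs_nonneg _) hδ'.le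

/-- De la Vallée-Poussin: the superlinear growth of `Φ` makes the tails uniformly small. -/
lemma uniformIntegrable_of_lintegral_le_one [IsFiniteMeasure ν] (hΦ : IsYoung Φ)
    {u : ι → X → ℝ} (hu : ∀ i, Measurable (u i)) {δ : ℝ} (hδ : 0 < δ)
    (h : ∀ i, ∫⁻ x, ENNReal.ofReal (Φ (|u i x| / δ)) ∂ν ≤ 1) : UniformIntegrable u 1 ν := by
  refine uniformIntegrable_of le_rfl one_ne_top (fun i => (hu i).aestronglyMeasurable)
    fun η hη => ?_
  obtain ⟨C, hC⟩ := (hΦ.eventually_le_mul hδ hη).exists_forall_of_atTop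
  refine ⟨C.toNNReal, fun i => ?_⟩
  have htail (x : X) : ‖{x | C.toNNReal ≤ ‖u i x‖₊}.indicator (u i) x‖ₑ ≤
      ENNReal.ofReal η * ENNReal.ofReal (Φ (|u i x| / δ)) := by
    rw [enorm_indicator_eq_indicator_enorm]
    refine Set.indicator_apply_le' (fun hx => ?_) fun _ => zero_le
    rw [← ENNReal.ofReal_mul hη.le, Real.enorm_eq_ofReal_abs]
    exact ENNReal.ofReal_le_ofReal (hC _ (Real.toNNReal_le_iff_le_coe.1 hx))
  calc eLpNorm ({x | C.toNNReal ≤ ‖u i x‖₊}.indicator (u i)) 1 ν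
      ≤ ∫⁻ x, ENNReal.ofReal η * ENNReal.ofReal (Φ (|u i x| / δ)) ∂ν := by
        rw [eLpNorm_one_eq_lintegral_enorm]
        exact lintegral_mono htail
    _ = ENNReal.ofReal η * ∫⁻ x, ENNReal.ofReal (Φ (|u i x| / δ)) ∂ν :=
        lintegral_const_mul' _ _ ENNReal.ofReal_ne_top
    _ ≤ ENNReal.ofReal η := mul_le_of_le_one_right' (h i)

lemma uniformIntegrable_of_iSup_luxNorm_lt_top [IsFiniteMeasure ν] (hΦ : IsYoung Φ)
    {u : ι → X → ℝ} (hu : ∀ i, Measurable (u i)) (h : (⨆ i, luxNorm Φ ν (u i)) < ⊤) :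
    UniformIntegrable u 1 ν := by
  obtain ⟨δ, -, hδ⟩ := ENNReal.lt_iff_exists_real_btwn.1 h
  have hδpos : 0 < δ := ENNReal.ofReal_pos.1 (zero_le.trans_lt hδ.1)
  exact uniformIntegrable_of_lintegral_le_one hΦ hu hδpos fun i =>
    lintegral_le_one_of_luxNorm_lt hΦ.monotoneOn ((le_iSup _ i).trans_lt hδ.1)

lemma integrable_of_luxNorm_lt_top [IsFiniteMeasure ν] (hΦ : IsYoung Φ) {u : X → ℝ}
    (hu : Measurable u) (h : luxNorm Φ ν u < ⊤) : Integrable u ν :=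
  memLp_one_iff_integrable.1 <|
    (uniformIntegrable_of_iSup_luxNorm_lt_top (ι := Unit) hΦ (fun _ => hu)
      (by rwa [ciSup_const])).memLp ()

end Luxemburg

section UniformIntegrability

variable {X ι : Type*} [MeasurableSpace X] {m : Measure X}

lemma uniformIntegrable_of_restrict {f : ι → X → ℝ} {A : Set X}
    (hf : ∀ i, AEStronglyMeasurable (f i) m) (hA : ∀ i, Function.support (f i) ⊆ A)
    (h : UniformIntegrable f 1 (m.restrict A)) : UniformIntegrable f 1 m := by
  obtain ⟨-, htail, C, hC⟩ := h
  refine ⟨hf, fun η hη => ?_, C, fun i => ?_⟩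
  · obtain ⟨δ, hδ, hle⟩ := htail hη
    refine ⟨δ, hδ, fun i s hs hsδ => ?_⟩
    have hsupp : Function.support (s.indicator (f i)) ⊆ A :=
      (Set.support_indicator.trans_subset Set.inter_subset_right).trans (hA i)
    rw [← eLpNorm_restrict_eq_of_support_subset hsupp]
    exact hle i s hs ((Measure.restrict_apply_le _ _).trans hsδ)
  · rw [← eLpNorm_restrict_eq_of_support_subset (hA i)]
    exact hC i

lemma uniformIntegrable_prod_of_iSup_luxNorm_restrict_lt_top [SFinite m] {Q : Set X}
    [IsFiniteMeasure (m.restrict Q)] {Ω : Type*} [MeasurableSpace Ω] {μ : Measure Ω}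
    [IsFiniteMeasure μ] {Φ : ℝ → ℝ} (hΦ : IsYoung Φ) {u : ι → X → Ω → ℝ}
    (hu : ∀ i, Measurable fun p : X × Ω => u i p.1 p.2) (hzero : ∀ i, ∀ x ∉ Q, ∀ ω, u i x ω = 0)
    (hbd : (⨆ i, luxNorm Φ ((m.restrict Q).prod μ) fun p => u i p.1 p.2) < ⊤) :
    UniformIntegrable (fun i (p : X × Ω) => u i p.1 p.2) 1 (m.prod μ) := by
  have hrestrict : (m.restrict Q).prod μ = (m.prod μ).restrict (Q ×ˢ Set.univ) := by
    rw [← Measure.prod_restrict, Measure.restrict_univ]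
  have hsupp (i : ι) : Function.support (fun p : X × Ω => u i p.1 p.2) ⊆ Q ×ˢ Set.univ :=
    fun p hp => ⟨not_not.1 fun hQ => hp (hzero i p.1 hQ p.2), Set.mem_univ _⟩
  refine uniformIntegrable_of_restrict (fun i => (hu i).aestronglyMeasurable) hsupp ?_
  rw [← hrestrict]
  exact uniformIntegrable_of_iSup_luxNorm_lt_top hΦ hu hbd

lemma lintegral_enorm_mul_enorm_le {f D : X → ℝ} (hf : AEStronglyMeasurable f m) {C : ℝ≥0∞}
    (hCtop : C ≠ ⊤) (hC : ∀ x, ‖D x‖ₑ ≤ C) (τ : ℝ≥0∞) :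
    ∫⁻ x, ‖f x‖ₑ * ‖D x‖ₑ ∂m ≤
      τ * eLpNorm f 1 m + C * eLpNorm ({x | τ ≤ ‖D x‖ₑ}.indicator f) 1 m := by
  have hsplit (x : X) : ‖f x‖ₑ * ‖D x‖ₑ ≤
      τ * ‖f x‖ₑ + C * ‖{x | τ ≤ ‖D x‖ₑ}.indicator f x‖ₑ := by
    rcases le_or_gt τ ‖D x‖ₑ with hx | hx
    · rw [Set.indicator_of_mem (by exact hx), mul_comm]
      exact (mul_le_mul_left (hC x) _).trans le_add_self
    · rw [mul_comm]
      exact (mul_le_mul_left hx.le _).trans le_self_add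
  simp only [eLpNorm_one_eq_lintegral_enorm]
  calc ∫⁻ x, ‖f x‖ₑ * ‖D x‖ₑ ∂m
      ≤ ∫⁻ x, (τ * ‖f x‖ₑ + C * ‖{x | τ ≤ ‖D x‖ₑ}.indicator f x‖ₑ) ∂m := lintegral_mono hsplit
    _ = _ := by
        rw [lintegral_add_left' (hf.enorm.const_mul τ), lintegral_const_mul'' τ hf.enorm,
          lintegral_const_mul' C _ hCtop]

lemma tendsto_integral_mul_zero_of_uniformIntegrable {f D : ι → X → ℝ} {l : Filter ι}
    (hf : UniformIntegrable f 1 m) (hD : ∀ i, Measurable (D i)) {C : ℝ}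
    (hC : ∀ i x, |D i x| ≤ C) (hlim : Tendsto (fun i => ∫⁻ x, ‖D i x‖ₑ ∂m) l (𝓝 0)) :
    Tendsto (fun i => ∫ x, f i x * D i x ∂m) l (𝓝 0) := by
  obtain ⟨hmeas, htail, M, hM⟩ := hf
  have hCe (i : ι) (x : X) : ‖D i x‖ₑ ≤ ENNReal.ofReal C := by
    rw [Real.enorm_eq_ofReal_abs]
    exact ENNReal.ofReal_le_ofReal (hC i x)
  rw [tendsto_zero_iff_enorm_tendsto_zero, ENNReal.tendsto_nhds_zero]
  intro η hη
  obtain ⟨τ, hτ, hτη⟩ := ENNReal.exists_nnreal_pos_mul_lt (a := M + ENNReal.ofReal C)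
    (by finiteness) hη.ne'
  obtain ⟨δ, hδ, hsmall⟩ := htail (ε := τ) hτ
  have hτδ : 0 < (τ : ℝ≥0∞) * ENNReal.ofReal δ :=
    ENNReal.mul_pos (by exact_mod_cast hτ.ne') (ENNReal.ofReal_pos.2 hδ).ne'
  filter_upwards [ENNReal.tendsto_nhds_zero.1 hlim _ hτδ] with i hi
  have hlevel : m {x | (τ : ℝ≥0∞) ≤ ‖D i x‖ₑ} ≤ ENNReal.ofReal δ :=
    (ENNReal.mul_le_mul_iff_right (by exact_mod_cast hτ.ne') coe_ne_top).1 <|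
      (mul_meas_ge_le_lintegral (hD i).enorm _).trans hi
  calc ‖∫ x, f i x * D i x ∂m‖ₑ
      ≤ ∫⁻ x, ‖f i x‖ₑ * ‖D i x‖ₑ ∂m := by
        simpa only [enorm_mul] using enorm_integral_le_lintegral_enorm fun x => f i x * D i x
    _ ≤ τ * eLpNorm (f i) 1 m +
          ENNReal.ofReal C * eLpNorm ({x | (τ : ℝ≥0∞) ≤ ‖D i x‖ₑ}.indicator (f i)) 1 m :=
        lintegral_enorm_mul_enorm_le (hmeas i) ENNReal.ofReal_ne_top (hCe i) τ
    _ ≤ τ * M + ENNReal.ofReal C * τ := by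
        gcongr
        · exact hM i
        · simpa using hsmall i _ (measurableSet_le measurable_const (hD i).enorm) hlevel
    _ = τ * (M + ENNReal.ofReal C) := by ring
    _ ≤ η := hτη.le

lemma abs_integral_le_of_abs_le_const [IsFiniteMeasure m] {f : X → ℝ} {C : ℝ}
    (hC : ∀ x, |f x| ≤ C) : |∫ x, f x ∂m| ≤ C * m.real Set.univ :=
  norm_integral_le_of_norm_le_const (f := f) (.of_forall hC)

end UniformIntegrability

lemma measurePreserving_prodMk_left {S α : Type*} [MeasurableSpace S] [MeasurableSpace α]
    {ν : Measure S} [SFinite ν] {m : Measure α} [SFinite m] {τ : S → α → α}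
    (hτm : Measurable fun q : S × α => τ q.1 q.2) (hτ : ∀ s, MeasurePreserving (τ s) m m) :
    MeasurePreserving (fun q : S × α => (q.1, τ q.1 q.2)) (ν.prod m) (ν.prod m) :=
  (MeasurePreserving.id ν).skew_product hτm (.of_forall fun s => (hτ s).map_eq)

lemma measure_mul_lintegral_enorm_comp_action_sub_le {G α : Type*} [AddGroup G]
    [MeasurableSpace G] [MeasurableSpace α] (κ : Measure G) {m : Measure α}
    {S : G → α → α} (hadd : ∀ g h, S (g + h) = S g ∘ S h)
    (hS : ∀ g, MeasurePreserving (S g) m m) {f : α → ℝ} (hfm : Measurable f) {U V : Set G}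
    (hV : MeasurableSet V) (hVU : V ⊆ U) {g : G} (hg : ∀ x ∈ V, g + x ∈ U) :
    κ V * ∫⁻ a, ‖f (S g a) - f a‖ₑ ∂m ≤ ∫⁻ x, ∫⁻ a,
      ‖U.indicator 1 (g + x) * f (S (g + x) a) - U.indicator 1 x * f (S x a)‖ₑ ∂m ∂κ := by
  have hshift (x : G) : ∫⁻ a, ‖f (S g a) - f a‖ₑ ∂m =
      ∫⁻ a, ‖f (S (g + x) a) - f (S x a)‖ₑ ∂m := by
    have hmeas : Measurable fun a => ‖f (S g a) - f a‖ₑ :=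
      ((hfm.comp (hS g).measurable).sub hfm).enorm
    simp only [← (hS x).lintegral_comp hmeas, hadd, Function.comp_apply]
  calc κ V * ∫⁻ a, ‖f (S g a) - f a‖ₑ ∂m
      = ∫⁻ _ in V, ∫⁻ a, ‖f (S g a) - f a‖ₑ ∂m ∂κ := by rw [setLIntegral_const, mul_comm]
    _ = ∫⁻ x in V, ∫⁻ a,
          ‖U.indicator 1 (g + x) * f (S (g + x) a) - U.indicator 1 x * f (S x a)‖ₑ ∂m ∂κ := by
        refine setLIntegral_congr_fun hV fun x hx => ?_
        simp only [hshift x, Set.indicator_of_mem (hg x hx), Set.indicator_of_mem (hVU hx),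
          Pi.one_apply, one_mul]
    _ ≤ _ := setLIntegral_le_lintegral _ _

section StrongContinuity

variable {G α : Type*} [AddGroup G] [TopologicalSpace G] [IsTopologicalAddGroup G]
  [SecondCountableTopology G] [MeasurableSpace G] [BorelSpace G] [MeasurableSpace α]

lemma tendsto_lintegral_enorm_add_left_sub (κ : Measure G) [κ.IsAddLeftInvariant]
    [IsLocallyFiniteMeasure κ] [κ.InnerRegularCompactLTTop] {f : G → ℝ} (hf : Integrable f κ) :
    Tendsto (fun g => ∫⁻ x, ‖f (g + x) - f x‖ₑ ∂κ) (𝓝 0) (𝓝 0) := by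
  have hmem : MemLp f 1 κ := memLp_one_iff_integrable.2 hf
  have hdist (g : G) : ∫⁻ x, ‖f (g + x) - f x‖ₑ ∂κ =
      edist (DomAddAct.mk g +ᵥ hmem.toLp f) (hmem.toLp f) := by
    rw [DomAddAct.mk_vadd_toLp, Lp.edist_toLp_toLp, eLpNorm_one_eq_lintegral_enorm]
    rfl
  have hcont : Continuous fun g : G => edist (DomAddAct.mk g +ᵥ hmem.toLp f) (hmem.toLp f) := by
    have : Fact ((1 : ℝ≥0∞) ≠ ⊤) := ⟨one_ne_top⟩
    have := DomAddAct.continuous_mk (M := G)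
    fun_prop
  simpa [hdist] using hcont.tendsto 0

lemma tendsto_lintegral_prod_enorm_add_left_sub (κ : Measure G) [κ.IsAddLeftInvariant]
    [IsLocallyFiniteMeasure κ] [κ.InnerRegularCompactLTTop] [SFinite κ]
    {m : Measure α} [SFinite m] {F : G × α → ℝ} (hFm : Measurable F)
    (hF : Integrable F (κ.prod m)) :
    Tendsto (fun g => ∫⁻ x, ∫⁻ a, ‖F (g + x, a) - F (x, a)‖ₑ ∂m ∂κ) (𝓝 0) (𝓝 0) := by
  have hdiff (g : G) : Measurable fun q : α × G => ‖F (g + q.2, q.1) - F (q.2, q.1)‖ₑ := by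
    fun_prop
  have hswap (g : G) : ∫⁻ x, ∫⁻ a, ‖F (g + x, a) - F (x, a)‖ₑ ∂m ∂κ =
      ∫⁻ a, ∫⁻ x, ‖F (g + x, a) - F (x, a)‖ₑ ∂κ ∂m :=
    lintegral_lintegral_swap ((hdiff g).comp measurable_swap).aemeasurable
  have hbound (g : G) (a : α) :
      ∫⁻ x, ‖F (g + x, a) - F (x, a)‖ₑ ∂κ ≤ 2 * ∫⁻ x, ‖F (x, a)‖ₑ ∂κ := by
    calc ∫⁻ x, ‖F (g + x, a) - F (x, a)‖ₑ ∂κ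
        ≤ ∫⁻ x, (‖F (g + x, a)‖ₑ + ‖F (x, a)‖ₑ) ∂κ := lintegral_mono fun _ => enorm_sub_le
      _ = 2 * ∫⁻ x, ‖F (x, a)‖ₑ ∂κ := by
          rw [lintegral_add_right _ (by fun_prop),
            lintegral_add_left_eq_self (fun x => ‖F (x, a)‖ₑ) g, two_mul]
  have hfinite : ∫⁻ a, 2 * ∫⁻ x, ‖F (x, a)‖ₑ ∂κ ∂m ≠ ⊤ := by
    rw [lintegral_const_mul' _ _ ofNat_ne_top,
      ← lintegral_prod_symm' (fun q => ‖F q‖ₑ) (by fun_prop)]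
    exact mul_ne_top ofNat_ne_top hF.hasFiniteIntegral.ne
  have hslice : ∀ᵐ a ∂m,
      Tendsto (fun g => ∫⁻ x, ‖F (g + x, a) - F (x, a)‖ₑ ∂κ) (𝓝 0) (𝓝 0) := by
    filter_upwards [hF.prod_left_ae] with a ha
    exact tendsto_lintegral_enorm_add_left_sub κ (f := fun x => F (x, a)) ha
  simp only [hswap]
  rw [← lintegral_zero (μ := m)]
  exact tendsto_lintegral_filter_of_dominated_convergence (fun a => 2 * ∫⁻ x, ‖F (x, a)‖ₑ ∂κ)
    (.of_forall fun g => (hdiff g).lintegral_prod_right')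
    (.of_forall fun g => .of_forall (hbound g)) hfinite
    hslice

/-- Averaging over `x` in a neighbourhood of `0` compares the action of `g` with the translation
by `g` of `x ↦ f (S x a)`, to which the continuity of translations in `L¹` applies. -/
lemma tendsto_lintegral_enorm_comp_action_sub [LocallyCompactSpace G] {m : Measure α} [SFinite m]
    {S : G → α → α} (hadd : ∀ g h, S (g + h) = S g ∘ S h)
    (hS : ∀ g, MeasurePreserving (S g) m m) (hSm : Measurable fun q : G × α => S q.1 q.2)
    {f : α → ℝ} (hfm : Measurable f) (hf : Integrable f m) :
    Tendsto (fun g => ∫⁻ a, ‖f (S g a) - f a‖ₑ ∂m) (𝓝 0) (𝓝 0) := by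
  let κ : Measure G := Measure.addHaar
  obtain ⟨U, hU0, hUo, hUtop⟩ := κ.exists_isOpen_measure_lt_top 0
  obtain ⟨V, hVo, hV0, hVU⟩ := exists_open_nhds_zero_half (hUo.mem_nhds hU0)
  have hsub : V ⊆ U := fun x hx => by simpa using hVU 0 hV0 x hx
  have hVpos : κ V ≠ 0 := (hVo.measure_pos κ ⟨0, hV0⟩).ne'
  have hVtop : κ V ≠ ⊤ := ((measure_mono hsub).trans_lt hUtop).ne
  let F : G × α → ℝ := fun q => U.indicator 1 q.1 * f (S q.1 q.2)
  have hFm : Measurable F :=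
    ((measurable_one.indicator hUo.measurableSet).comp measurable_fst).mul (hfm.comp hSm)
  have hF : Integrable F (κ.prod m) := by
    have hone : Integrable (U.indicator (1 : G → ℝ)) κ :=
      (integrable_indicator_iff hUo.measurableSet).2 (integrableOn_const hUtop.ne)
    exact (measurePreserving_prodMk_left hSm hS).integrable_comp_of_integrable (hone.mul_prod hf)
  have hle : ∀ᶠ g in 𝓝 0, ∫⁻ a, ‖f (S g a) - f a‖ₑ ∂m ≤
      (κ V)⁻¹ * ∫⁻ x, ∫⁻ a, ‖F (g + x, a) - F (x, a)‖ₑ ∂m ∂κ := by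
    filter_upwards [hVo.mem_nhds hV0] with g hg
    rw [← ENNReal.mul_le_iff_le_inv hVpos hVtop]
    exact measure_mul_lintegral_enorm_comp_action_sub_le κ hadd hS hfm hVo.measurableSet hsub
      (hVU g hg)
  have hlim := ENNReal.Tendsto.const_mul (tendsto_lintegral_prod_enorm_add_left_sub κ hFm hF)
    (.inr (ENNReal.inv_ne_top.2 hVpos))
  rw [mul_zero] at hlim
  exact tendsto_of_tendsto_of_tendsto_of_le_of_le' tendsto_const_nhds hlim
    (.of_forall fun _ => zero_le) hle

end StrongContinuity

section AdjointAverage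

variable {S α : Type*} [MeasurableSpace S] [MeasurableSpace α] {ν : Measure S} [IsFiniteMeasure ν]
  {m : Measure α} [SFinite m] {τ : S → α → α} {f : α → ℝ}

lemma integrable_prod_comp_of_measurePreserving (hτm : Measurable fun q : S × α => τ q.1 q.2)
    (hτ : ∀ s, MeasurePreserving (τ s) m m) (hf : Integrable f m) :
    Integrable (fun q : S × α => f (τ q.1 q.2)) (ν.prod m) :=
  (measurePreserving_prodMk_left hτm hτ).integrable_comp_of_integrable (hf.comp_snd ν)

lemma integrable_integral_comp_of_measurePreserving
    (hτm : Measurable fun q : S × α => τ q.1 q.2) (hτ : ∀ s, MeasurePreserving (τ s) m m)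
    (hf : Integrable f m) : Integrable (fun a => ∫ s, f (τ s a) ∂ν) m :=
  (integrable_prod_comp_of_measurePreserving hτm hτ hf).integral_prod_right

lemma integral_integral_comp_mul_of_measurePreserving {σ : S → α → α} {h : α → ℝ}
    (hτm : Measurable fun q : S × α => τ q.1 q.2) (hτ : ∀ s, MeasurePreserving (τ s) m m)
    (hσm : Measurable fun q : S × α => σ q.1 q.2) (hστ : ∀ s a, h (σ s (τ s a)) = h a)
    (hf : Integrable f m) (hhm : Measurable h) {C : ℝ} (hC : ∀ a, |h a| ≤ C) :
    ∫ a, (∫ s, f (τ s a) ∂ν) * h a ∂m = ∫ a, f a * ∫ s, h (σ s a) ∂ν ∂m := by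
  have hleft : Integrable (fun q : S × α => f (τ q.1 q.2) * h q.2) (ν.prod m) :=
    (integrable_prod_comp_of_measurePreserving hτm hτ hf).mul_bdd (c := C)
      (hhm.comp measurable_snd).aestronglyMeasurable (.of_forall fun q => hC q.2)
  have hright : Integrable (fun q : S × α => f q.2 * h (σ q.1 q.2)) (ν.prod m) :=
    (hf.comp_snd ν).mul_bdd (c := C) (hhm.comp hσm).aestronglyMeasurable
      (.of_forall fun q => hC (σ q.1 q.2))
  have hchange (s : S) : ∫ a, f (τ s a) * h a ∂m = ∫ a, f a * h (σ s a) ∂m := by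
    have hslice : AEStronglyMeasurable (fun a => f a * h (σ s a)) m :=
      hf.aestronglyMeasurable.mul
        (hhm.comp (hσm.comp measurable_prodMk_left)).aestronglyMeasurable
    calc ∫ a, f (τ s a) * h a ∂m = ∫ a, f (τ s a) * h (σ s (τ s a)) ∂m := by simp only [hστ]
      _ = ∫ a, f a * h (σ s a) ∂m := by
          rw [← integral_map (f := fun a => f a * h (σ s a)) (hτ s).aemeasurable
            (by rwa [(hτ s).map_eq]), (hτ s).map_eq]
  calc ∫ a, (∫ s, f (τ s a) ∂ν) * h a ∂m
      = ∫ a, ∫ s, f (τ s a) * h a ∂ν ∂m := by simp only [integral_mul_const]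
    _ = ∫ s, ∫ a, f (τ s a) * h a ∂m ∂ν := (integral_integral_swap hleft).symm
    _ = ∫ s, ∫ a, f a * h (σ s a) ∂m ∂ν := by simp only [hchange]
    _ = ∫ a, ∫ s, f a * h (σ s a) ∂ν ∂m := integral_integral_swap hright
    _ = ∫ a, f a * ∫ s, h (σ s a) ∂ν ∂m := by simp only [integral_const_mul]

end AdjointAverage

section Periodic

variable {N : ℕ} {f g : (Fin N → ℝ) → ℝ}

lemma ZPeriodic.apply_fract (hg : ZPeriodic g) (y : Fin N → ℝ) :
    g (fun i => Int.fract (y i)) = g y := by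
  rw [← hg _ fun i => ⌊y i⌋]
  exact congrArg g (funext fun i => Int.fract_add_floor (y i))

lemma ZPeriodic.exists_bound (hg : ZPeriodic g) (hgc : Continuous g) : ∃ C, ∀ y, |g y| ≤ C := by
  obtain ⟨C, hC⟩ := isCompact_Icc.exists_bound_of_continuousOn (s := Ycube N) hgc.continuousOn
  refine ⟨C, fun y => ?_⟩
  rw [← hg.apply_fract y]
  exact hC _ ⟨fun i => Int.fract_nonneg _, fun i => (Int.fract_lt_one _).le⟩

instance isFiniteMeasure_restrict_Ycube (N : ℕ) : IsFiniteMeasure (volume.restrict (Ycube N)) :=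
  isFiniteMeasure_restrict.2 isCompact_Icc.measure_ne_top

lemma measurePreserving_fract_add (s : ℝ) :
    MeasurePreserving (fun t => Int.fract (t + s))
      (volume.restrict (Set.Icc 0 1)) (volume.restrict (Set.Icc 0 1)) := by
  have hmeas : Measurable fun t : ℝ => Int.fract (t + s) := by fun_prop
  refine ⟨hmeas, Measure.ext fun A hA => ?_⟩
  have hinv (n : AddSubgroup.zmultiples (1 : ℝ)) :
      (fun t => n +ᵥ t) ⁻¹' (Int.fract ⁻¹' A) = Int.fract ⁻¹' A := by
    obtain ⟨_, n, rfl⟩ := n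
    ext t
    simp [AddSubgroup.vadd_def]
  rw [Measure.map_apply hmeas hA, Measure.restrict_apply (hmeas hA), Measure.restrict_apply hA]
  calc volume ((fun t => Int.fract (t + s)) ⁻¹' A ∩ Set.Icc 0 1)
      = volume ((fun t => Int.fract (t + s)) ⁻¹' A ∩ Set.Ioc 0 1) :=
        measure_congr ((ae_eq_refl _).inter Ioc_ae_eq_Icc.symm)
    _ = volume ((· + s) ⁻¹' (Int.fract ⁻¹' A ∩ Set.Ioc s (s + 1))) := by
        congr 1
        ext t
        simp [add_comm s 1]
    _ = volume (Int.fract ⁻¹' A ∩ Set.Ioc s (s + 1)) := measure_preimage_add_right _ _ _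
    _ = volume (Int.fract ⁻¹' A ∩ Set.Ioc 0 (0 + 1)) :=
        (isAddFundamentalDomain_Ioc one_pos s).measure_set_eq (isAddFundamentalDomain_Ioc one_pos 0)
          (measurable_fract hA) hinv
    _ = volume (Int.fract ⁻¹' A ∩ Set.Ico 0 1) := by
        rw [zero_add]
        exact measure_congr ((ae_eq_refl _).inter Ico_ae_eq_Ioc.symm)
    _ = volume (A ∩ Set.Ico 0 1) := by
        congr 1
        ext t
        exact and_congr_left fun ht => by rw [Set.mem_preimage, Int.fract_eq_self.2 ht]
    _ = volume (A ∩ Set.Icc 0 1) := measure_congr ((ae_eq_refl _).inter Ico_ae_eq_Icc)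

lemma measurePreserving_pi_fract_add (s : Fin N → ℝ) :
    MeasurePreserving (fun (y : Fin N → ℝ) i => Int.fract (y i + s i))
      (volume.restrict (Ycube N)) (volume.restrict (Ycube N)) := by
  have hcube : volume.restrict (Ycube N) =
      Measure.pi fun _ : Fin N => volume.restrict (Set.Icc (0 : ℝ) 1) := by
    rw [← Measure.restrict_pi_pi, Set.pi_univ_Icc]
    rfl
  rw [hcube]
  exact measurePreserving_pi _ _ fun i => measurePreserving_fract_add (s i)

lemma ZPeriodic.integral_sub (ν : Measure (Fin N → ℝ)) (hg : ZPeriodic g) :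
    ZPeriodic fun y => ∫ s, g (y - s) ∂ν := by
  intro y k
  simp only [add_sub_right_comm, hg _ k]

variable {ν : Measure (Fin N → ℝ)} [IsFiniteMeasure ν]

lemma setIntegral_Ycube_integral_add_mul (hf : ZPeriodic f) (hfi : IntegrableOn f (Ycube N))
    (hg : ZPeriodic g) (hgc : Continuous g) :
    ∫ y in Ycube N, (∫ s, f (y + s) ∂ν) * g y = ∫ y in Ycube N, f y * ∫ s, g (y - s) ∂ν := by
  obtain ⟨C, hC⟩ := hg.exists_bound hgc
  have h := integral_integral_comp_mul_of_measurePreserving (ν := ν)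
    (τ := fun (s y : Fin N → ℝ) i => Int.fract (y i + s i)) (σ := fun s y => y - s)
    (by fun_prop) measurePreserving_pi_fract_add (by fun_prop) ?_ hfi hgc.measurable hC
  · simpa only [← Pi.add_apply, hf.apply_fract] using h
  · intro s y
    rw [← hg y fun i => -⌊y i + s i⌋]
    congr 1
    ext i
    simp only [Pi.sub_apply, Pi.add_apply, Int.fract, Int.cast_neg]
    ring

lemma ZPeriodic.continuous_integral_sub (hg : ZPeriodic g) (hgc : Continuous g) :
    Continuous fun y => ∫ s, g (y - s) ∂ν := by
  obtain ⟨C, hC⟩ := hg.exists_bound hgc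
  exact continuous_of_dominated (fun y => by fun_prop)
    (fun y => .of_forall fun s => hC (y - s)) (integrable_const C)
    (.of_forall fun s => by fun_prop)

end Periodic

section Oscillation

variable {N : ℕ} {Ω : Type*}

/-- The `x`-translations together with the dynamical system, as an action of `ℝ^N × ℝ^N` on
`ℝ^N × Ω`. -/
def prodAction (T : (Fin N → ℝ) → Ω → Ω) (a : (Fin N → ℝ) × (Fin N → ℝ))
    (p : (Fin N → ℝ) × Ω) : (Fin N → ℝ) × Ω :=
  (a.1 + p.1, T a.2 p.2)

/-- The change of variables `(x, ω) ↦ (x, T(x/e)ω)` that produces the stochastic oscillation at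
scale `e`. -/
def oscMap (T : (Fin N → ℝ) → Ω → Ω) (e : ℝ) (p : (Fin N → ℝ) × Ω) : (Fin N → ℝ) × Ω :=
  (p.1, T (e⁻¹ • p.1) p.2)

/-- The test function `h(x, T(x/e)ω) g(x/e²)`, oscillating at the stochastic scale `e` and at the
periodic scale `e²`. -/
def oscTest (T : (Fin N → ℝ) → Ω → Ω) (e : ℝ) (h : (Fin N → ℝ) × Ω → ℝ) (g : (Fin N → ℝ) → ℝ)
    (p : (Fin N → ℝ) × Ω) : ℝ :=
  h (oscMap T e p) * g ((e ^ 2)⁻¹ • p.1)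

/-- The increment of `h` under the displacement `(-e² s, -e s)` of `(x, x/e)` caused by the
translation `x ↦ x - e² s`. -/
def slowIncrement (T : (Fin N → ℝ) → Ω → Ω) (e : ℝ) (h : (Fin N → ℝ) × Ω → ℝ)
    (s : Fin N → ℝ) (p : (Fin N → ℝ) × Ω) : ℝ :=
  h (prodAction T (-(e ^ 2 • s), -(e • s)) p) - h p

variable {h v : (Fin N → ℝ) × Ω → ℝ} {g : (Fin N → ℝ) → ℝ} {A B : ℝ}

lemma abs_oscTest_le (hA : ∀ p, |h p| ≤ A) (hB : ∀ y, |g y| ≤ B) (T : (Fin N → ℝ) → Ω → Ω)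
    (e : ℝ) (p : (Fin N → ℝ) × Ω) : |oscTest T e h g p| ≤ A * B := by
  rw [oscTest, abs_mul]
  exact mul_le_mul (hA _) (hB _) (abs_nonneg _) ((abs_nonneg _).trans (hA p))

variable [MeasurableSpace Ω] {μ : Measure Ω} {T : (Fin N → ℝ) → Ω → Ω}

lemma IsDynSys.apply_add (hT : IsDynSys μ T) (x y : Fin N → ℝ) (ω : Ω) :
    T (x + y) ω = T x (T y ω) :=
  congrFun (hT.2.1 x y) ω

lemma IsDynSys.measurePreserving (hT : IsDynSys μ T) (x : Fin N → ℝ) :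
    MeasurePreserving (T x) μ μ :=
  hT.2.2.1 x

lemma IsDynSys.measurable_comp (hT : IsDynSys μ T) {β : Type*} [MeasurableSpace β]
    {b : β → Fin N → ℝ} {w : β → Ω} (hb : Measurable b) (hw : Measurable w) :
    Measurable fun z => T (b z) (w z) :=
  hT.2.2.2.comp (hb.prodMk hw)

lemma IsDynSys.oscMap_sub_smul (hT : IsDynSys μ T) {e : ℝ} (he : e ≠ 0)
    (p : (Fin N → ℝ) × Ω) (s : Fin N → ℝ) :
    oscMap T e (p.1 - e ^ 2 • s, p.2) = prodAction T (-(e ^ 2 • s), -(e • s)) (oscMap T e p) := by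
  have hscale : e⁻¹ • (p.1 - e ^ 2 • s) = -(e • s) + e⁻¹ • p.1 := by
    rw [smul_sub, smul_smul, sq, inv_mul_cancel_left₀ he, neg_add_eq_sub]
  rw [oscMap, hscale, hT.apply_add, ← neg_add_eq_sub]
  rfl

lemma IsDynSys.measurable_prodAction (hT : IsDynSys μ T) :
    Measurable fun q : ((Fin N → ℝ) × (Fin N → ℝ)) × ((Fin N → ℝ) × Ω) =>
      prodAction T q.1 q.2 := by
  refine Measurable.prodMk ?_ (hT.measurable_comp ?_ ?_) <;> fun_prop

lemma IsDynSys.measurable_slowIncrement (hT : IsDynSys μ T) (hh : Measurable h) (e : ℝ) :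
    Measurable fun q : (Fin N → ℝ) × (Fin N → ℝ) × Ω => slowIncrement T e h q.1 q.2 := by
  have hdisplace : Measurable fun q : (Fin N → ℝ) × (Fin N → ℝ) × Ω =>
      ((-(e ^ 2 • q.1), -(e • q.1)), q.2) := by fun_prop
  exact (hh.comp (hT.measurable_prodAction.comp hdisplace)).sub (hh.comp measurable_snd)

lemma IsDynSys.measurable_oscTest (hT : IsDynSys μ T) (hh : Measurable h) (hg : Continuous g)
    (e : ℝ) : Measurable (oscTest T e h g) :=
  (hh.comp (measurable_fst.prodMk (hT.measurable_comp (by fun_prop) measurable_snd))).mul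
    (hg.measurable.comp (by fun_prop))

lemma IsDynSys.measurable_integral_oscTest_sub_smul (hT : IsDynSys μ T)
    (ν : Measure (Fin N → ℝ)) [SFinite ν] (hh : Measurable h) (hg : Continuous g) (e : ℝ) :
    Measurable fun p : (Fin N → ℝ) × Ω => ∫ s, oscTest T e h g (p.1 - e ^ 2 • s, p.2) ∂ν := by
  have hjoint : Measurable fun q : ((Fin N → ℝ) × Ω) × (Fin N → ℝ) =>
      oscTest T e h g (q.1.1 - e ^ 2 • q.2, q.1.2) :=
    (hT.measurable_oscTest hh hg e).comp (by fun_prop)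
  exact hjoint.stronglyMeasurable.integral_prod_right'.measurable

lemma IsDynSys.integrable_mul_oscTest (hT : IsDynSys μ T) (hv : Integrable v (volume.prod μ))
    (hh : Measurable h) (hA : ∀ p, |h p| ≤ A) (hg : Continuous g) (hB : ∀ y, |g y| ≤ B)
    (e : ℝ) : Integrable (fun p => v p * oscTest T e h g p) (volume.prod μ) :=
  hv.mul_bdd (c := A * B) (hT.measurable_oscTest hh hg e).aestronglyMeasurable
    (.of_forall (abs_oscTest_le hA hB T e))

lemma IsDynSys.integral_oscTest_sub_smul_sub (hT : IsDynSys μ T) (ν : Measure (Fin N → ℝ))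
    [IsFiniteMeasure ν] (hh : Measurable h) (hA : ∀ p, |h p| ≤ A) (hg : Continuous g)
    (hB : ∀ y, |g y| ≤ B) {e : ℝ} (he : e ≠ 0) (p : (Fin N → ℝ) × Ω) :
    (∫ s, oscTest T e h g (p.1 - e ^ 2 • s, p.2) ∂ν) -
        oscTest T e h (fun y => ∫ s, g (y - s) ∂ν) p =
      ∫ s, slowIncrement T e h s (oscMap T e p) * g ((e ^ 2)⁻¹ • p.1 - s) ∂ν := by
  have hshift (s : Fin N → ℝ) : oscTest T e h g (p.1 - e ^ 2 • s, p.2) =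
      h (prodAction T (-(e ^ 2 • s), -(e • s)) (oscMap T e p)) * g ((e ^ 2)⁻¹ • p.1 - s) := by
    rw [oscTest, hT.oscMap_sub_smul he, smul_sub, inv_smul_smul₀ (pow_ne_zero 2 he)]
  have hshifted : Integrable (fun s => oscTest T e h g (p.1 - e ^ 2 • s, p.2)) ν :=
    .of_bound ((hT.measurable_oscTest hh hg e).comp (by fun_prop)).aestronglyMeasurable (A * B)
      (.of_forall fun s => abs_oscTest_le hA hB T e _)
  have hfixed : Integrable (fun s => h (oscMap T e p) * g ((e ^ 2)⁻¹ • p.1 - s)) ν :=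
    (Integrable.of_bound (by fun_prop) B (.of_forall fun s => hB _)).const_mul _
  rw [oscTest, ← integral_const_mul, ← integral_sub hshifted hfixed]
  simp only [hshift, slowIncrement, sub_mul]

variable [IsFiniteMeasure μ]

lemma IsDynSys.measurePreserving_prodAction (hT : IsDynSys μ T)
    (a : (Fin N → ℝ) × (Fin N → ℝ)) :
    MeasurePreserving (prodAction T a) (volume.prod μ) (volume.prod μ) :=
  (measurePreserving_add_left volume a.1).prod (hT.measurePreserving a.2)

lemma IsDynSys.measurePreserving_oscMap (hT : IsDynSys μ T) (e : ℝ) :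
    MeasurePreserving (oscMap T e) (volume.prod μ) (volume.prod μ) :=
  measurePreserving_prodMk_left (τ := fun x => T (e⁻¹ • x))
    (hT.measurable_comp (by fun_prop) measurable_snd) fun x => hT.measurePreserving (e⁻¹ • x)

lemma IsDynSys.tendsto_lintegral_enorm_prodAction_sub (hT : IsDynSys μ T) (hhm : Measurable h)
    (hh : Integrable h (volume.prod μ)) :
    Tendsto (fun a => ∫⁻ p, ‖h (prodAction T a p) - h p‖ₑ ∂(volume.prod μ)) (𝓝 0) (𝓝 0) := by
  refine tendsto_lintegral_enorm_comp_action_sub (fun a b => ?_) hT.measurePreserving_prodAction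
    hT.measurable_prodAction hhm hh
  funext p
  simp only [prodAction, Prod.fst_add, Prod.snd_add, hT.apply_add, Function.comp_apply, add_assoc]

lemma IsDynSys.lintegral_enorm_slowIncrement_le (hT : IsDynSys μ T) (hh : Measurable h) (e : ℝ)
    (s : Fin N → ℝ) :
    ∫⁻ p, ‖slowIncrement T e h s p‖ₑ ∂(volume.prod μ) ≤ 2 * ∫⁻ p, ‖h p‖ₑ ∂(volume.prod μ) := by
  calc ∫⁻ p, ‖slowIncrement T e h s p‖ₑ ∂(volume.prod μ)
      ≤ ∫⁻ p, (‖h (prodAction T (-(e ^ 2 • s), -(e • s)) p)‖ₑ + ‖h p‖ₑ) ∂(volume.prod μ) :=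
        lintegral_mono fun _ => enorm_sub_le
    _ = 2 * ∫⁻ p, ‖h p‖ₑ ∂(volume.prod μ) := by
        rw [lintegral_add_right _ hh.enorm,
          (hT.measurePreserving_prodAction _).lintegral_comp hh.enorm, two_mul]

lemma IsDynSys.tendsto_lintegral_lintegral_enorm_slowIncrement (hT : IsDynSys μ T)
    (ν : Measure (Fin N → ℝ)) [IsFiniteMeasure ν] (hhm : Measurable h)
    (hh : Integrable h (volume.prod μ)) :
    Tendsto (fun e => ∫⁻ s, ∫⁻ p, ‖slowIncrement T e h s p‖ₑ ∂(volume.prod μ) ∂ν)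
      (𝓝 0) (𝓝 0) := by
  have hmeas (e : ℝ) :
      Measurable fun s => ∫⁻ p, ‖slowIncrement T e h s p‖ₑ ∂(volume.prod μ) :=
    (hT.measurable_slowIncrement hhm e).enorm.lintegral_prod_right'
  have hfinite : ∫⁻ _ : Fin N → ℝ, 2 * ∫⁻ p, ‖h p‖ₑ ∂(volume.prod μ) ∂ν ≠ ⊤ := by
    rw [lintegral_const]
    exact mul_ne_top (mul_ne_top ofNat_ne_top hh.hasFiniteIntegral.ne) (measure_ne_top ν _)
  have hpointwise (s : Fin N → ℝ) :
      Tendsto (fun e => ∫⁻ p, ‖slowIncrement T e h s p‖ₑ ∂(volume.prod μ)) (𝓝 0) (𝓝 0) := by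
    have hdisplace : Tendsto (fun e : ℝ => (-(e ^ 2 • s), -(e • s))) (𝓝 0) (𝓝 0) :=
      Continuous.tendsto' (by fun_prop) _ _ (by simp)
    exact (hT.tendsto_lintegral_enorm_prodAction_sub hhm hh).comp hdisplace
  rw [← lintegral_zero (μ := ν)]
  exact tendsto_lintegral_filter_of_dominated_convergence _ (.of_forall hmeas)
    (.of_forall fun e => .of_forall (hT.lintegral_enorm_slowIncrement_le hhm e)) hfinite
    (.of_forall hpointwise)

lemma IsDynSys.lintegral_enorm_integral_oscTest_sub_le (hT : IsDynSys μ T)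
    (ν : Measure (Fin N → ℝ)) [IsFiniteMeasure ν] (hh : Measurable h) (hA : ∀ p, |h p| ≤ A)
    (hg : Continuous g) (hB : ∀ y, |g y| ≤ B) {e : ℝ} (he : e ≠ 0) :
    ∫⁻ p, ‖(∫ s, oscTest T e h g (p.1 - e ^ 2 • s, p.2) ∂ν) -
        oscTest T e h (fun y => ∫ s, g (y - s) ∂ν) p‖ₑ ∂(volume.prod μ) ≤
      ENNReal.ofReal B * ∫⁻ s, ∫⁻ p, ‖slowIncrement T e h s p‖ₑ ∂(volume.prod μ) ∂ν := by
  have hmeas := (hT.measurable_slowIncrement hh e).enorm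
  have hpointwise (p : (Fin N → ℝ) × Ω) :
      ‖(∫ s, oscTest T e h g (p.1 - e ^ 2 • s, p.2) ∂ν) -
        oscTest T e h (fun y => ∫ s, g (y - s) ∂ν) p‖ₑ ≤
      ENNReal.ofReal B * ∫⁻ s, ‖slowIncrement T e h s (oscMap T e p)‖ₑ ∂ν := by
    rw [hT.integral_oscTest_sub_smul_sub ν hh hA hg hB he,
      ← lintegral_const_mul' _ _ ENNReal.ofReal_ne_top]
    refine (enorm_integral_le_lintegral_enorm _).trans (lintegral_mono fun s => ?_)
    rw [enorm_mul, mul_comm, Real.enorm_eq_ofReal_abs (g _)]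
    gcongr
    exact hB _
  calc _ ≤ ∫⁻ p, ENNReal.ofReal B * ∫⁻ s, ‖slowIncrement T e h s (oscMap T e p)‖ₑ ∂ν
          ∂(volume.prod μ) := lintegral_mono hpointwise
    _ = ENNReal.ofReal B * ∫⁻ p, ∫⁻ s, ‖slowIncrement T e h s p‖ₑ ∂ν ∂(volume.prod μ) := by
        rw [lintegral_const_mul' _ _ ENNReal.ofReal_ne_top,
          (hT.measurePreserving_oscMap e).lintegral_comp hmeas.lintegral_prod_left']
    _ = _ := by
        rw [lintegral_lintegral_swap (f := fun p s => ‖slowIncrement T e h s p‖ₑ)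
          (hmeas.comp measurable_swap).aemeasurable]

lemma IsDynSys.tendsto_lintegral_enorm_integral_oscTest_sub (hT : IsDynSys μ T)
    (ν : Measure (Fin N → ℝ)) [IsFiniteMeasure ν] (hhm : Measurable h)
    (hh : Integrable h (volume.prod μ)) (hA : ∀ p, |h p| ≤ A) (hg : Continuous g)
    (hB : ∀ y, |g y| ≤ B) :
    Tendsto (fun e => ∫⁻ p, ‖(∫ s, oscTest T e h g (p.1 - e ^ 2 • s, p.2) ∂ν) -
      oscTest T e h (fun y => ∫ s, g (y - s) ∂ν) p‖ₑ ∂(volume.prod μ)) (𝓝[≠] 0) (𝓝 0) := by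
  have hlim := ENNReal.Tendsto.const_mul (a := ENNReal.ofReal B)
    (hT.tendsto_lintegral_lintegral_enorm_slowIncrement ν hhm hh) (.inr ENNReal.ofReal_ne_top)
  rw [mul_zero] at hlim
  refine tendsto_of_tendsto_of_tendsto_of_le_of_le' tendsto_const_nhds
    (hlim.mono_left nhdsWithin_le_nhds) (.of_forall fun _ => zero_le) ?_
  filter_upwards [eventually_mem_nhdsWithin] with e he
  exact hT.lintegral_enorm_integral_oscTest_sub_le ν hhm hA hg hB he

lemma IsDynSys.integral_integral_add_smul_mul_oscTest (hT : IsDynSys μ T)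
    (ν : Measure (Fin N → ℝ)) [IsFiniteMeasure ν] (hv : Integrable v (volume.prod μ))
    (hh : Measurable h) (hA : ∀ p, |h p| ≤ A) (hg : Continuous g) (hB : ∀ y, |g y| ≤ B)
    (e : ℝ) :
    ∫ p, (∫ s, v (p.1 + e ^ 2 • s, p.2) ∂ν) * oscTest T e h g p ∂(volume.prod μ) =
      ∫ p, v p * ∫ s, oscTest T e h g (p.1 - e ^ 2 • s, p.2) ∂ν ∂(volume.prod μ) :=
  integral_integral_comp_mul_of_measurePreserving
    (τ := fun s p => (p.1 + e ^ 2 • s, p.2)) (σ := fun s p => (p.1 - e ^ 2 • s, p.2))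
    (by fun_prop)
    (fun s => (measurePreserving_add_right volume (e ^ 2 • s)).prod (MeasurePreserving.id μ))
    (by fun_prop) (fun s p => by simp only [add_sub_cancel_right]) hv
    (hT.measurable_oscTest hh hg e) (abs_oscTest_le hA hB T e)

lemma IsDynSys.tendsto_integral_mul_integral_oscTest_sub (hT : IsDynSys μ T)
    (ν : Measure (Fin N → ℝ)) [IsFiniteMeasure ν] {ι : Type*} {l : Filter ι} {ε : ι → ℝ}
    (hε : Tendsto ε l (𝓝[≠] 0)) {f : ι → (Fin N → ℝ) × Ω → ℝ}
    (hf : UniformIntegrable f 1 (volume.prod μ)) (hhm : Measurable h)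
    (hh : Integrable h (volume.prod μ)) (hA : ∀ p, |h p| ≤ A) (hg : ZPeriodic g)
    (hgc : Continuous g) :
    Tendsto (fun i => ∫ p, f i p * ((∫ s, oscTest T (ε i) h g (p.1 - ε i ^ 2 • s, p.2) ∂ν) -
      oscTest T (ε i) h (fun y => ∫ s, g (y - s) ∂ν) p) ∂(volume.prod μ)) l (𝓝 0) := by
  obtain ⟨B, hB⟩ := hg.exists_bound hgc
  have hGc : Continuous fun y => ∫ s, g (y - s) ∂ν := hg.continuous_integral_sub hgc
  have hG (y : Fin N → ℝ) : |∫ s, g (y - s) ∂ν| ≤ B * ν.real Set.univ :=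
    abs_integral_le_of_abs_le_const fun s => hB (y - s)
  refine tendsto_integral_mul_zero_of_uniformIntegrable
    (C := A * B * ν.real Set.univ + A * (B * ν.real Set.univ)) hf (fun i => ?_) (fun i p => ?_)
    ((hT.tendsto_lintegral_enorm_integral_oscTest_sub ν hhm hh hA hgc hB).comp hε)
  · exact (hT.measurable_integral_oscTest_sub_smul ν hhm hgc (ε i)).sub
      (hT.measurable_oscTest hhm hGc (ε i))
  · exact (abs_sub _ _).trans (add_le_add
      (abs_integral_le_of_abs_le_const fun s => abs_oscTest_le hA hB T _ _)
      (abs_oscTest_le hA hG T _ _))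

/-- Averaging is self-adjoint up to reflection, so it can be moved onto the test function, where it
only affects the periodic factor `g` up to a remainder that vanishes in `L¹`. -/
lemma IsDynSys.tendsto_integral_integral_add_smul_mul_oscTest_sub (hT : IsDynSys μ T)
    (ν : Measure (Fin N → ℝ)) [IsFiniteMeasure ν] {ι : Type*} {l : Filter ι} {ε : ι → ℝ}
    (hε : Tendsto ε l (𝓝[≠] 0)) {f : ι → (Fin N → ℝ) × Ω → ℝ}
    (hf : UniformIntegrable f 1 (volume.prod μ)) (hhm : Measurable h)
    (hh : Integrable h (volume.prod μ)) (hA : ∀ p, |h p| ≤ A) (hg : ZPeriodic g)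
    (hgc : Continuous g) :
    Tendsto (fun i =>
      (∫ p, (∫ s, f i (p.1 + ε i ^ 2 • s, p.2) ∂ν) * oscTest T (ε i) h g p ∂(volume.prod μ)) -
        ∫ p, f i p * oscTest T (ε i) h (fun y => ∫ s, g (y - s) ∂ν) p ∂(volume.prod μ))
      l (𝓝 0) := by
  obtain ⟨B, hB⟩ := hg.exists_bound hgc
  have hGc : Continuous fun y => ∫ s, g (y - s) ∂ν := hg.continuous_integral_sub hgc
  obtain ⟨B', hG⟩ := (hg.integral_sub ν).exists_bound hGc
  refine (hT.tendsto_integral_mul_integral_oscTest_sub ν hε hf hhm hh hA hg hgc).congr fun i => ?_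
  have hfi : Integrable (f i) (volume.prod μ) := memLp_one_iff_integrable.1 (hf.memLp i)
  have havg : Integrable (fun p => f i p *
      ∫ s, oscTest T (ε i) h g (p.1 - ε i ^ 2 • s, p.2) ∂ν) (volume.prod μ) :=
    hfi.mul_bdd (c := A * B * ν.real Set.univ)
      (hT.measurable_integral_oscTest_sub_smul ν hhm hgc (ε i)).aestronglyMeasurable
      (.of_forall fun p => abs_integral_le_of_abs_le_const fun s => abs_oscTest_le hA hB T _ _)
  rw [hT.integral_integral_add_smul_mul_oscTest ν hfi hhm hA hgc hB,
    ← integral_sub havg (hT.integrable_mul_oscTest hfi hhm hA hGc hG (ε i))]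
  simp only [mul_sub]

lemma IsDynSys.setIntegral_integral_eq_integral_mul_oscTest (hT : IsDynSys μ T)
    {Q : Set (Fin N → ℝ)} (hv : Integrable v (volume.prod μ)) {φ : (Fin N → ℝ) → ℝ} {ψ : Ω → ℝ}
    (hφ : ∀ x ∉ Q, φ x = 0) (hm : Measurable fun p : (Fin N → ℝ) × Ω => φ p.1 * ψ p.2)
    (hA : ∀ p : (Fin N → ℝ) × Ω, |φ p.1 * ψ p.2| ≤ A) (hg : ZPeriodic g) (hgc : Continuous g)
    (e : ℝ) :
    ∫ x in Q, ∫ ω, v (x, ω) * φ x * ψ (T (e⁻¹ • x) ω) * g ((e ^ 2)⁻¹ • x) ∂μ =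
      ∫ p, v p * oscTest T e (fun p => φ p.1 * ψ p.2) g p ∂(volume.prod μ) := by
  obtain ⟨B, hB⟩ := hg.exists_bound hgc
  rw [setIntegral_eq_integral_of_forall_compl_eq_zero fun x hx => by simp [hφ x hx],
    integral_prod _ (hT.integrable_mul_oscTest hv hm hA hgc hB e)]
  simp only [oscTest, oscMap, mul_assoc]

lemma IsDynSys.tendsto_setIntegral_integral_average_sub (hT : IsDynSys μ T)
    (ν : Measure (Fin N → ℝ)) [IsFiniteMeasure ν] {ι : Type*} {l : Filter ι} {ε : ι → ℝ}
    (hε : Tendsto ε l (𝓝[≠] 0)) {u : ι → (Fin N → ℝ) → Ω → ℝ}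
    (hu : UniformIntegrable (fun i (p : (Fin N → ℝ) × Ω) => u i p.1 p.2) 1 (volume.prod μ))
    {Q : Set (Fin N → ℝ)} {φ : (Fin N → ℝ) → ℝ} {ψ : Ω → ℝ} (hφ : ∀ x ∉ Q, φ x = 0)
    (hm : Measurable fun p : (Fin N → ℝ) × Ω => φ p.1 * ψ p.2)
    (hi : Integrable (fun p : (Fin N → ℝ) × Ω => φ p.1 * ψ p.2) (volume.prod μ))
    (hA : ∀ p : (Fin N → ℝ) × Ω, |φ p.1 * ψ p.2| ≤ A) (hg : ZPeriodic g) (hgc : Continuous g) :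
    Tendsto (fun i =>
      (∫ x in Q, ∫ ω, (∫ s, u i (x + ε i ^ 2 • s) ω ∂ν) * φ x * ψ (T ((ε i)⁻¹ • x) ω) *
        g ((ε i ^ 2)⁻¹ • x) ∂μ) -
      ∫ x in Q, ∫ ω, u i x ω * φ x * ψ (T ((ε i)⁻¹ • x) ω) *
        (∫ s, g ((ε i ^ 2)⁻¹ • x - s) ∂ν) ∂μ) l (𝓝 0) := by
  refine (hT.tendsto_integral_integral_add_smul_mul_oscTest_sub ν hε hu hm hi hA hg hgc).congr
    fun i => ?_
  have hui : Integrable (fun p : (Fin N → ℝ) × Ω => u i p.1 p.2) (volume.prod μ) :=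
    memLp_one_iff_integrable.1 (hu.memLp i)
  have havg : Integrable (fun p : (Fin N → ℝ) × Ω => ∫ s, u i (p.1 + ε i ^ 2 • s) p.2 ∂ν)
      (volume.prod μ) :=
    integrable_integral_comp_of_measurePreserving
      (τ := fun s p => (p.1 + ε i ^ 2 • s, p.2)) (by fun_prop)
      (fun s => (measurePreserving_add_right volume _).prod (MeasurePreserving.id μ)) hui
  rw [← hT.setIntegral_integral_eq_integral_mul_oscTest havg hφ hm hA hg hgc,
    ← hT.setIntegral_integral_eq_integral_mul_oscTest hui hφ hm hA (hg.integral_sub ν)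
      (hg.continuous_integral_sub hgc)]

end Oscillation

section TwoScale

variable {N : ℕ} {Ω : Type*} [MeasurableSpace Ω] {μ : Measure Ω} [IsFiniteMeasure μ]
  {Q : Set (Fin N → ℝ)}

lemma setIntegral_integral_setIntegral_Ycube_integral_add {ν : Measure (Fin N → ℝ)}
    [IsFiniteMeasure ν] {u₀ : (Fin N → ℝ) → Ω → (Fin N → ℝ) → ℝ}
    (hper : ∀ x ω, ZPeriodic (u₀ x ω))
    (hint : Integrable (fun p : ((Fin N → ℝ) × Ω) × (Fin N → ℝ) => u₀ p.1.1 p.1.2 p.2)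
      (((volume.restrict Q).prod μ).prod (volume.restrict (Ycube N))))
    {g : (Fin N → ℝ) → ℝ} (hg : ZPeriodic g) (hgc : Continuous g) (φ : (Fin N → ℝ) → ℝ)
    (ψ : Ω → ℝ) :
    ∫ x in Q, ∫ ω, (∫ y in Ycube N, (∫ s, u₀ x ω (y + s) ∂ν) * φ x * ψ ω * g y) ∂μ =
      ∫ x in Q, ∫ ω, (∫ y in Ycube N, u₀ x ω y * φ x * ψ ω * ∫ s, g (y - s) ∂ν) ∂μ := by
  refine integral_congr_ae ?_
  filter_upwards [Measure.ae_ae_of_ae_prod hint.prod_right_ae] with x hx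
  refine integral_congr_ae ?_
  filter_upwards [hx] with ω hω
  have hmove (c d : ℝ) : c * φ x * ψ ω * d = φ x * ψ ω * (c * d) := by ring
  simp only [hmove, integral_const_mul]
  rw [setIntegral_Ycube_integral_add_mul (hper x ω) hω hg hgc]

theorem stmt4_general {T : (Fin N → ℝ) → Ω → Ω} (hT : IsDynSys μ T) {ε : ℕ → ℝ}
    (hε : Tendsto ε atTop (𝓝[≠] 0)) {u : ℕ → (Fin N → ℝ) → Ω → ℝ}
    (hu : UniformIntegrable (fun k (p : (Fin N → ℝ) × Ω) => u k p.1 p.2) 1 (volume.prod μ))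
    {u₀ : (Fin N → ℝ) → Ω → (Fin N → ℝ) → ℝ} (hper : ∀ x ω, ZPeriodic (u₀ x ω))
    (hint : Integrable (fun p : ((Fin N → ℝ) × Ω) × (Fin N → ℝ) => u₀ p.1.1 p.1.2 p.2)
      (((volume.restrict Q).prod μ).prod (volume.restrict (Ycube N))))
    (hconv : WeakStoch2Scale μ T Q ε u u₀) (ν : Measure (Fin N → ℝ)) [IsFiniteMeasure ν] :
    WeakStoch2Scale μ T Q ε (fun k x ω => ∫ s, u k (x + ε k ^ 2 • s) ω ∂ν)
      (fun x ω y => ∫ s, u₀ x ω (y + s) ∂ν) := by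
  intro φ hφ hφc hφQ ψ hψ hψb g hgc hg
  obtain ⟨Cφ, hCφ⟩ := hφc.exists_bound_of_continuous hφ.continuous
  obtain ⟨Cψ, hCψ⟩ := hψb
  have hm : Measurable fun p : (Fin N → ℝ) × Ω => φ p.1 * ψ p.2 :=
    (hφ.continuous.measurable.comp measurable_fst).mul (hψ.comp measurable_snd)
  have hh : Integrable (fun p : (Fin N → ℝ) × Ω => φ p.1 * ψ p.2) (volume.prod μ) :=
    (hφ.continuous.integrable_of_hasCompactSupport hφc).mul_prod
      (.of_bound hψ.aestronglyMeasurable Cψ (.of_forall hCψ))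
  have hA (p : (Fin N → ℝ) × Ω) : |φ p.1 * ψ p.2| ≤ Cφ * Cψ := by
    rw [abs_mul]
    exact mul_le_mul (hCφ _) (hCψ _) (abs_nonneg _) ((norm_nonneg _).trans (hCφ p.1))
  have hφz (x : Fin N → ℝ) (hx : x ∉ Q) : φ x = 0 :=
    image_eq_zero_of_notMem_tsupport fun hx' => hx (hφQ hx')
  have hdiff := hT.tendsto_setIntegral_integral_average_sub ν hε hu hφz hm hh hA hg hgc
  have hconvG := hconv φ hφ hφc hφQ ψ hψ ⟨Cψ, hCψ⟩ _ (hg.continuous_integral_sub hgc)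
    (hg.integral_sub ν)
  rw [setIntegral_integral_setIntegral_Ycube_integral_add hper hint hg hgc]
  simpa only [sub_add_cancel, zero_add] using hdiff.add hconvG

end TwoScale

section BallAverage

variable {N : ℕ}

lemma enorm2_smul (c : ℝ) (v : Fin N → ℝ) : enorm2 (c • v) = |c| * enorm2 v := by
  simp only [enorm2, Pi.smul_apply, smul_eq_mul, mul_pow, ← Finset.mul_sum]
  rw [Real.sqrt_mul (sq_nonneg c), Real.sqrt_sq_eq_abs]

open Pointwise in
lemma setOf_enorm2_lt_mul (r : ℝ) {c : ℝ} (hc : 0 < c) :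
    {ρ : Fin N → ℝ | enorm2 ρ < c * r} = c • {ρ : Fin N → ℝ | enorm2 ρ < r} := by
  ext ρ
  rw [Set.mem_smul_set_iff_inv_smul_mem₀ hc.ne', Set.mem_ofPred_eq, Set.mem_ofPred_eq,
    enorm2_smul, abs_of_pos (inv_pos.2 hc), inv_mul_lt_iff₀ hc]

lemma inv_measure_mul_setIntegral_eq_integral_cond {X : Type*} [MeasurableSpace X]
    (m : Measure X) (A : Set X) (f : X → ℝ) :
    (m A).toReal⁻¹ * ∫ x in A, f x ∂m = ∫ x, f x ∂(ProbabilityTheory.cond m A) := by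
  rw [ProbabilityTheory.cond, integral_smul_measure, ENNReal.toReal_inv, smul_eq_mul]

lemma inv_volume_mul_setIntegral_enorm2_lt_mul (r : ℝ) {c : ℝ} (hc : 0 < c)
    (f : (Fin N → ℝ) → ℝ) :
    (volume {ρ : Fin N → ℝ | enorm2 ρ < c * r}).toReal⁻¹ *
        ∫ ρ in {ρ : Fin N → ℝ | enorm2 ρ < c * r}, f ρ =
      ∫ ρ, f (c • ρ) ∂(ProbabilityTheory.cond volume {ρ : Fin N → ℝ | enorm2 ρ < r}) := by
  rw [← inv_measure_mul_setIntegral_eq_integral_cond, setOf_enorm2_lt_mul r hc,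
    Measure.setIntegral_comp_smul_of_pos _ _ _ hc, Measure.addHaar_smul, ENNReal.toReal_mul,
    ENNReal.toReal_ofReal (abs_nonneg _), abs_of_pos (by positivity), mul_inv, smul_eq_mul]
  ring

end BallAverage

/-- two-scale convergence of normalized ball averages at scale `ε²`. -/
theorem stmt4 {N : ℕ} (hN : 1 ≤ N) {Ω : Type*} [MeasurableSpace Ω] (μ : Measure Ω)
    [IsProbabilityMeasure μ] (hgen : CountGenModNull μ)
    (Φ : ℝ → ℝ) (hΦ : IsYoung Φ) (hΦ2 : Delta2 Φ) (hΦc2 : Delta2 (conjY Φ))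
    (T : (Fin N → ℝ) → Ω → Ω) (hT : IsDynSys μ T)
    (Q : Set (Fin N → ℝ)) (hQo : IsOpen Q) (hQb : Bornology.IsBounded Q)
    (ε : ℕ → ℝ) (hε : ∀ k, ε k ∈ Set.Ioc (0 : ℝ) 1) (hε0 : Tendsto ε atTop (nhds 0))
    (u : ℕ → (Fin N → ℝ) → Ω → ℝ)
    (humeas : ∀ k, Measurable fun p : (Fin N → ℝ) × Ω => u k p.1 p.2)
    (huzero : ∀ k, ∀ x ∉ Q, ∀ ω, u k x ω = 0)
    (hubd : (⨆ k, luxNorm Φ ((volume.restrict Q).prod μ) fun p => u k p.1 p.2) < ⊤)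
    (u₀ : (Fin N → ℝ) → Ω → (Fin N → ℝ) → ℝ)
    (hu₀meas : Measurable fun p : ((Fin N → ℝ) × Ω) × (Fin N → ℝ) => u₀ p.1.1 p.1.2 p.2)
    (hu₀per : ∀ x ω, ZPeriodic (u₀ x ω))
    (hu₀bd : luxNorm Φ (((volume.restrict Q).prod μ).prod (volume.restrict (Ycube N)))
      (fun p => u₀ p.1.1 p.1.2 p.2) < ⊤)
    (hconv : WeakStoch2Scale μ T Q ε u u₀)
    (r : ℝ) (hr : 0 < r) :
    WeakStoch2Scale μ T Q ε
      (fun k x ω =>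
        ((volume {ρ : Fin N → ℝ | enorm2 ρ < (ε k) ^ 2 * r}).toReal)⁻¹ *
          ∫ ρ in {ρ : Fin N → ℝ | enorm2 ρ < (ε k) ^ 2 * r}, u k (x + ρ) ω)
      (fun x ω y =>
        ((volume {ρ : Fin N → ℝ | enorm2 ρ < r}).toReal)⁻¹ *
          ∫ ρ in {ρ : Fin N → ℝ | enorm2 ρ < r}, u₀ x ω (y + ρ)) := by
  have : IsFiniteMeasure (volume.restrict Q) := isFiniteMeasure_restrict.2 hQb.measure_lt_top.ne
  have hε' : Tendsto ε atTop (𝓝[≠] 0) :=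
    tendsto_nhdsWithin_iff.2 ⟨hε0, .of_forall fun k => (hε k).1.ne'⟩
  have hball (k : ℕ) := inv_volume_mul_setIntegral_enorm2_lt_mul (N := N) r (pow_pos (hε k).1 2)
  simp only [hball, inv_measure_mul_setIntegral_eq_integral_cond]
  exact stmt4_general hT hε'
    (uniformIntegrable_prod_of_iSup_luxNorm_restrict_lt_top hΦ humeas huzero hubd) hu₀per
    (integrable_of_luxNorm_lt_top hΦ hu₀meas hu₀bd) hconv _
end
end

section
/- Let Φ be a Young function such that Φ and its conjugate Φ̃ are of class Δ₂, let {T(x)}_{x∈ℝ^N} be an N-dimensional dynamical system on Ω, and let f satisfy (H₁)–(H₄). Let v : \bar{Q}×Ω×ℝ^N → ℝ^N be a vector field each of whose components is a finite sum Σ_i φ_i(x)ψ_i(ω)g_i(y) with φ_i continuous on \bar{Q}, ψ_i : Ω → ℝ bounded measurable, and g_i : ℝ^N → ℝ continuous ℤ^N-periodic. Then lim_{ε→0⁺} ∫_{Q×Ω} f(x, T(x/ε)ω, x/ε², v(x, T(x/ε)ω, x/ε²)) dx dμ(ω) = ∫_{Q×Ω×Y} f(x, ω, y, v(x,ω,y))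 dx dμ(ω) dy. -/
open MeasureTheory Filter Topology ENNReal

noncomputable section

/-!
Since each `T(z)` preserves `μ`, the probabilistic oscillation disappears: the energy equals
`∫_Q F(x, x/ε²) dx` with `F(x, y) = ∫ f(x, ω, y, v(x, ω, y)) dμ(ω)`, and `F` is bounded,
continuous, and periodic in `y`.  It thus defines an integrable map `u` from `Q`, extended by zero
to `ℝ^N`, into the continuous functions on the torus.  Translating `x` by `δz` shifts the phase
`x/δ` by `z`, so the oscillating integral changes by at most the `L¹` translation modulus
`∫ ‖u(x + δz) - u(x)‖ dx`, which tends to `0` with `δ`.  Averaging over `z` in the unit cube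
replaces the oscillating phase by the mean over the torus.
-/

section TranslationModulus

variable {G E : Type*} [TopologicalSpace G] [AddGroup G] [IsTopologicalAddGroup G]
  [MeasurableSpace G] [BorelSpace G] {μ : Measure G} [μ.IsAddRightInvariant]
  [NormedAddCommGroup E] {u : G → E}

theorem norm_integral_norm_translate_sub_le (hu : Integrable u μ) (h : G) :
    ‖∫ x, ‖u (x + h) - u x‖ ∂μ‖ ≤ 2 * ∫ x, ‖u x‖ ∂μ := by
  have hτu : Integrable (fun x => u (x + h)) μ := hu.comp_add_right h
  calc ‖∫ x, ‖u (x + h) - u x‖ ∂μ‖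
      ≤ ∫ x, (‖u (x + h)‖ + ‖u x‖) ∂μ :=
        norm_integral_le_of_norm_le (hτu.norm.add hu.norm) <| .of_forall fun x => by
          rw [norm_norm]
          exact norm_sub_le _ _
    _ = 2 * ∫ x, ‖u x‖ ∂μ := by
        rw [integral_add hτu.norm hu.norm, integral_add_right_eq_self (fun x => ‖u x‖), two_mul]

theorem continuous_integral_norm_translate_sub [IsLocallyFiniteMeasure μ]
    [μ.InnerRegularCompactLTTop] (hu : Integrable u μ) :
    Continuous fun h : G => ∫ x, ‖u (x + h) - u x‖ ∂μ := by
  let shift : C(G, C(G, G)) :=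
    (ContinuousMap.mk (fun p : G × G => p.2 + p.1) (by fun_prop)).curry
  have shift_preserving (h : G) : MeasurePreserving (shift h) μ μ :=
    measurePreserving_add_right μ h
  have continuous_translate : Continuous fun h : G =>
      Lp.compMeasurePreserving (shift h) (shift_preserving h) (hu.toL1 u) :=
    continuous_const.compMeasurePreservingLp shift.continuous shift_preserving one_ne_top
  refine (continuous_translate.sub (continuous_const (y := hu.toL1 u))).norm.congr fun h => ?_
  have hτu : Integrable (fun x => u (x + h)) μ := hu.comp_add_right h
  have translate_toL1 : Lp.compMeasurePreserving (shift h) (shift_preserving h) (hu.toL1 u) =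
      hτu.toL1 _ :=
    Lp.toLp_compMeasurePreserving (memLp_one_iff_integrable.2 hu) (shift_preserving h)
  rw [Pi.sub_apply, translate_toL1, ← Integrable.toL1_sub,
    L1.norm_of_fun_eq_integral_norm (hτu.sub hu)]
  rfl

theorem tendsto_integral_integral_norm_translate_smul_sub {V : Type*} [NormedAddCommGroup V]
    [NormedSpace ℝ V] [FiniteDimensional ℝ V] [MeasurableSpace V] [BorelSpace V] {μ ν : Measure V}
    [μ.IsAddHaarMeasure] [IsFiniteMeasure ν] {u : V → E} (hu : Integrable u μ) :
    Tendsto (fun δ : ℝ => ∫ z, ∫ x, ‖u (x + δ • z) - u x‖ ∂μ ∂ν) (𝓝 0) (𝓝 0) := by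
  have hmod := continuous_integral_norm_translate_sub hu
  have tendsto_inner (z : V) :
      Tendsto (fun δ : ℝ => ∫ x, ‖u (x + δ • z) - u x‖ ∂μ) (𝓝 0) (𝓝 0) := by
    have hcont : Continuous fun δ : ℝ => ∫ x, ‖u (x + δ • z) - u x‖ ∂μ :=
      hmod.comp (continuous_id.smul continuous_const)
    simpa using hcont.tendsto 0
  simpa using tendsto_integral_filter_of_dominated_convergence (fun _ => 2 * ∫ x, ‖u x‖ ∂μ)
    (.of_forall fun δ => (hmod.comp (continuous_const_smul δ)).aestronglyMeasurable)
    (.of_forall fun δ => .of_forall fun z => norm_integral_norm_translate_sub_le hu (δ • z))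
    (integrable_const (μ := ν) _) (.of_forall tendsto_inner)

end TranslationModulus

section Oscillation

theorem integrable_apply_comp {α K E : Type*} [MeasurableSpace α] {ρ : Measure α}
    [TopologicalSpace K] [CompactSpace K] [NormedAddCommGroup E] {w : α → C(K, E)}
    (hw : Integrable w ρ) {g : α → K} (hg : AEStronglyMeasurable g ρ) :
    Integrable (fun x => w x (g x)) ρ :=
  hw.norm.mono' ((by fun_prop : Continuous fun p : C(K, E) × K => p.1 p.2).comp_aestronglyMeasurable
    (hw.aestronglyMeasurable.prodMk hg)) (.of_forall fun x => (w x).norm_coe_le_norm (g x))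

variable {V K E : Type*} [NormedAddCommGroup V] [NormedSpace ℝ V] [FiniteDimensional ℝ V]
  [MeasurableSpace V] [BorelSpace V] {μ ν : Measure V}
  [TopologicalSpace K] [CompactSpace K]
  [AddGroup K] [IsTopologicalAddGroup K]
  [NormedAddCommGroup E] {u : V → C(K, E)} {π : V →+ K}

theorem integrable_prod_translate [IsFiniteMeasure ν] (hu : Integrable u μ) {g : V → K}
    (hg : Continuous g) (hπ : Continuous π) :
    Integrable (fun p : V × V => u p.1 (g p.1 + π p.2)) (μ.prod ν) :=
  integrable_apply_comp (hu.comp_fst ν) (by fun_prop)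

variable [μ.IsAddHaarMeasure] [NormedSpace ℝ E]

theorem norm_integral_oscillating_sub_translate_le (hu : Integrable u μ) (hπ : Continuous π)
    {δ : ℝ} (hδ : δ ≠ 0) (z : V) :
    ‖∫ x, u x (π (δ⁻¹ • x)) ∂μ - ∫ x, u x (π (δ⁻¹ • x) + π z) ∂μ‖
      ≤ ∫ x, ‖u (x + δ • z) - u x‖ ∂μ := by
  have hτu : Integrable (fun x => u (x + δ • z)) μ := hu.comp_add_right _
  have hphase : AEStronglyMeasurable (fun x => π (δ⁻¹ • x) + π z) μ := by fun_prop
  have translate_phase : ∫ x, u x (π (δ⁻¹ • x)) ∂μ =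
      ∫ x, u (x + δ • z) (π (δ⁻¹ • x) + π z) ∂μ := by
    rw [← integral_add_right_eq_self (fun x => u x (π (δ⁻¹ • x))) (δ • z)]
    simp only [smul_add, inv_smul_smul₀ hδ, map_add]
  rw [translate_phase,
    ← integral_sub (integrable_apply_comp hτu hphase) (integrable_apply_comp hu hphase)]
  exact norm_integral_le_of_norm_le (hτu.sub hu).norm
    (.of_forall fun x => (u (x + δ • z) - u x).norm_coe_le_norm _)

variable [SecondCountableTopology K] [MeasurableSpace K] [BorelSpace K] {η : Measure K}
  [η.IsAddLeftInvariant]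

theorem integral_integral_translate [IsFiniteMeasure ν] (hu : Integrable u μ) {g : V → K}
    (hg : Continuous g) (hπ : Continuous π) (hν : MeasurePreserving π ν η) :
    ∫ z, ∫ x, u x (g x + π z) ∂μ ∂ν = ∫ x, ∫ k, u x k ∂η ∂μ := by
  rw [← integral_integral_swap (f := fun x z => u x (g x + π z))
    (integrable_prod_translate hu hg hπ)]
  refine integral_congr_ae (.of_forall fun x => ?_)
  calc ∫ z, u x (g x + π z) ∂ν
      = ∫ k, u x (g x + k) ∂η := by
        rw [← hν.map_eq, integral_map hν.aemeasurable]
        exact Continuous.aestronglyMeasurable (by fun_prop)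
    _ = ∫ k, u x k ∂η := integral_add_left_eq_self (u x) (g x)

theorem norm_integral_oscillating_sub_integral_integral_le [IsProbabilityMeasure ν]
    [CompleteSpace E] (hu : Integrable u μ) (hπ : Continuous π) (hν : MeasurePreserving π ν η)
    {δ : ℝ} (hδ : δ ≠ 0) :
    ‖∫ x, u x (π (δ⁻¹ • x)) ∂μ - ∫ x, ∫ k, u x k ∂η ∂μ‖
      ≤ ∫ z, ∫ x, ‖u (x + δ • z) - u x‖ ∂μ ∂ν := by
  have hphase : Continuous fun x => π (δ⁻¹ • x) := by fun_prop
  have hmod : Integrable (fun z => ∫ x, ‖u (x + δ • z) - u x‖ ∂μ) ν :=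
    .of_bound ((continuous_integral_norm_translate_sub hu).comp
      (continuous_const_smul δ)).aestronglyMeasurable _
      (.of_forall fun z => norm_integral_norm_translate_sub_le hu (δ • z))
  calc ‖∫ x, u x (π (δ⁻¹ • x)) ∂μ - ∫ x, ∫ k, u x k ∂η ∂μ‖
      = ‖∫ z, (∫ x, u x (π (δ⁻¹ • x)) ∂μ - ∫ x, u x (π (δ⁻¹ • x) + π z) ∂μ) ∂ν‖ := by
        rw [integral_sub (integrable_const _)
            (integrable_prod_translate hu hphase hπ).integral_prod_right,
          integral_integral_translate hu hphase hπ hν, integral_const, probReal_univ, one_smul]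
    _ ≤ ∫ z, ∫ x, ‖u (x + δ • z) - u x‖ ∂μ ∂ν :=
        norm_integral_le_of_norm_le hmod
          (.of_forall (norm_integral_oscillating_sub_translate_le hu hπ hδ))

theorem tendsto_integral_oscillating [IsProbabilityMeasure ν] [CompleteSpace E]
    (hu : Integrable u μ) (hπ : Continuous π) (hν : MeasurePreserving π ν η) :
    Tendsto (fun δ : ℝ => ∫ x, u x (π (δ⁻¹ • x)) ∂μ) (𝓝[≠] 0)
      (𝓝 (∫ x, ∫ k, u x k ∂η ∂μ)) := by
  rw [tendsto_iff_norm_sub_tendsto_zero]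
  refine squeeze_zero' (.of_forall fun _ => norm_nonneg _) ?_
    ((tendsto_integral_integral_norm_translate_smul_sub (ν := ν) hu).mono_left nhdsWithin_le_nhds)
  filter_upwards [self_mem_nhdsWithin] with δ hδ
  exact norm_integral_oscillating_sub_integral_integral_le hu hπ hν hδ

end Oscillation

section Torus

/-- `ℤ^ι`-periodicity of a function on `ℝ^ι` with values in an arbitrary type. -/
def IsIntPeriodic {ι E : Type*} (g : (ι → ℝ) → E) : Prop :=
  ∀ (y : ι → ℝ) (k : ι → ℤ), g (y + fun i => (k i : ℝ)) = g y

/-- The covering homomorphism `ℝ^ι → ℝ^ι/ℤ^ι`. -/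
def torusProj (ι : Type*) : (ι → ℝ) →+ UnitAddTorus ι where
  toFun y i := y i
  map_zero' := rfl
  map_add' _ _ := rfl

theorem isOpenQuotientMap_torusProj (ι : Type*) : IsOpenQuotientMap (torusProj ι) :=
  .piMap fun _ => QuotientAddGroup.isOpenQuotientMap_mk

theorem IsIntPeriodic.eq_of_torusProj_eq {ι E : Type*} {g : (ι → ℝ) → E} (hg : IsIntPeriodic g)
    {y z : ι → ℝ} (h : torusProj ι y = torusProj ι z) : g y = g z := by
  have differ_by_integer (i : ι) : ∃ n : ℤ, n • (1 : ℝ) = z i - y i :=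
    AddSubgroup.mem_zmultiples_iff.1 (QuotientAddGroup.eq_iff_sub_mem.1 (congrFun h i).symm)
  choose k hk using differ_by_integer
  rw [← hg y k]
  congr 1
  ext i
  rw [Pi.add_apply, ← zsmul_one, hk i, add_sub_cancel]

theorem exists_continuousMap_torus {ι X E : Type*} [TopologicalSpace X] [TopologicalSpace E]
    {F : X → (ι → ℝ) → E} (hF : Continuous (Function.uncurry F))
    (hper : ∀ x, IsIntPeriodic (F x)) :
    ∃ u : C(X, C(UnitAddTorus ι, E)), ∀ x y, u x (torusProj ι y) = F x y := by
  have hq : IsQuotientMap (Prod.map id (torusProj ι) : X × (ι → ℝ) → X × UnitAddTorus ι) :=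
    (IsOpenQuotientMap.id.prodMap (isOpenQuotientMap_torusProj ι)).isQuotientMap
  have hfactor : Function.FactorsThrough (Function.uncurry F) (Prod.map id (torusProj ι)) := by
    rintro ⟨x, y⟩ ⟨x', z⟩ h
    obtain ⟨rfl, hyz⟩ := Prod.mk.inj h
    exact (hper x).eq_of_torusProj_eq hyz
  let π : C(X × (ι → ℝ), X × UnitAddTorus ι) := ⟨_, hq.continuous⟩
  exact ⟨(hq.lift (f := π) ⟨_, hF⟩ hfactor).curry,
    fun x y => DFunLike.congr_fun (hq.lift_comp (f := π) ⟨_, hF⟩ hfactor) (x, y)⟩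

theorem IsIntPeriodic.exists_norm_le {ι E : Type*} [SeminormedAddCommGroup E] {g : (ι → ℝ) → E}
    (hper : IsIntPeriodic g) (hg : Continuous g) : ∃ C, ∀ y, ‖g y‖ ≤ C := by
  obtain ⟨u, hu⟩ := exists_continuousMap_torus (X := Unit) (F := fun _ => g) (by fun_prop)
    fun _ => hper
  exact ⟨‖u ()‖, fun y => hu () y ▸ (u ()).norm_coe_le_norm _⟩

variable {ι : Type*} [Fintype ι]

theorem measurePreserving_torusProj :
    MeasurePreserving (torusProj ι) (volume.restrict (Set.Icc 0 1)) volume := by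
  have h := measurePreserving_pi (fun _ : ι => volume.restrict (Set.Ioc (0 : ℝ) (0 + 1)))
    (fun _ : ι => (volume : Measure UnitAddCircle)) fun _ => UnitAddCircle.measurePreserving_mk 0
  rw [← Measure.restrict_pi_pi] at h
  simp only [zero_add] at h
  rwa [Measure.restrict_congr_set (Measure.univ_pi_Ioc_ae_eq_Icc (f := fun _ => 0)
    (g := fun _ => 1))] at h

instance isProbabilityMeasure_restrict_Icc_zero_one :
    IsProbabilityMeasure (volume.restrict (Set.Icc (0 : ι → ℝ) 1)) :=
  ⟨by simp [Real.volume_Icc_pi]⟩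

variable {E : Type*} [NormedAddCommGroup E] {Q : Set (ι → ℝ)} {F : (ι → ℝ) → (ι → ℝ) → E} {C : ℝ}

theorem exists_integrableOn_torus (hQ : MeasurableSet Q) (hQfin : volume Q ≠ ∞)
    (hF : ContinuousOn (Function.uncurry F) (Q ×ˢ Set.univ))
    (hC : ∀ x ∈ Q, ∀ y, ‖F x y‖ ≤ C) (hper : ∀ x ∈ Q, IsIntPeriodic (F x)) :
    ∃ u : (ι → ℝ) → C(UnitAddTorus ι, E), IntegrableOn u Q ∧
      ∀ x ∈ Q, ∀ y, u x (torusProj ι y) = F x y := by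
  obtain ⟨w, hw⟩ := exists_continuousMap_torus (F := fun x : Q => F x)
    (hF.comp_continuous (f := fun p : Q × (ι → ℝ) => ((p.1 : ι → ℝ), p.2)) (by fun_prop)
      fun p => ⟨p.1.2, trivial⟩) fun x => hper x x.2
  let u : (ι → ℝ) → C(UnitAddTorus ι, E) := Function.extend Subtype.val w 0
  have u_coe (x : Q) : u x = w x := Subtype.val_injective.extend_apply _ _ x
  have hu (x : ι → ℝ) (hx : x ∈ Q) (y : ι → ℝ) : u x (torusProj ι y) = F x y := by
    rw [u_coe ⟨x, hx⟩, hw]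
  have continuousOn_u : ContinuousOn u Q :=
    continuousOn_iff_continuous_domRestrict.2 (w.continuous.congr fun x => (u_coe x).symm)
  have norm_u_le (x : ι → ℝ) (hx : x ∈ Q) : ‖u x‖ ≤ C :=
    ContinuousMap.norm_le_of_nonempty _ |>.2 <|
      (isOpenQuotientMap_torusProj ι).surjective.forall.2 fun y => hu x hx y ▸ hC x hx y
  exact ⟨u, .of_bound hQfin.lt_top (continuousOn_u.aestronglyMeasurable hQ) C
    ((ae_restrict_iff' hQ).2 (.of_forall norm_u_le)), hu⟩

theorem tendsto_setIntegral_oscillating [NormedSpace ℝ E] [CompleteSpace E]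
    (hQ : MeasurableSet Q) (hQfin : volume Q ≠ ∞)
    (hF : ContinuousOn (Function.uncurry F) (Q ×ˢ Set.univ))
    (hC : ∀ x ∈ Q, ∀ y, ‖F x y‖ ≤ C) (hper : ∀ x ∈ Q, IsIntPeriodic (F x)) :
    Tendsto (fun δ : ℝ => ∫ x in Q, F x (δ⁻¹ • x)) (𝓝[≠] 0)
      (𝓝 (∫ x in Q, ∫ y in Set.Icc 0 1, F x y)) := by
  obtain ⟨u, hu, huF⟩ := exists_integrableOn_torus hQ hQfin hF hC hper
  have hπ := (isOpenQuotientMap_torusProj ι).continuous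
  have integrable_indicator_u : Integrable (Q.indicator u) :=
    (integrable_indicator_iff (f := u) hQ).2 hu
  have tendsto_indicator :=
    tendsto_integral_oscillating integrable_indicator_u hπ measurePreserving_torusProj
  have integral_indicator_eq {g : (ι → ℝ) → C(UnitAddTorus ι, E) → E} (hg : ∀ x, g x 0 = 0) :
      ∫ x, g x (Q.indicator u x) = ∫ x in Q, g x (u x) := by
    rw [← integral_indicator hQ]
    congr 1 with x
    by_cases hx : x ∈ Q <;> simp [hx, hg]
  have average_eq (x : ι → ℝ) (hx : x ∈ Q) : ∫ k, u x k = ∫ y in Set.Icc 0 1, F x y := by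
    rw [← measurePreserving_torusProj.map_eq, integral_map hπ.aemeasurable
      (u x).continuous.aestronglyMeasurable]
    simp only [huF x hx]
  convert! tendsto_indicator using 2 with δ
  · rw [integral_indicator_eq (g := fun x w => w (torusProj ι (δ⁻¹ • x))) fun _ => rfl]
    exact setIntegral_congr_fun hQ fun x hx => (huF x hx _).symm
  · rw [integral_indicator_eq (g := fun _ w => ∫ k, w k) fun _ => by simp]
    exact setIntegral_congr_fun hQ fun x hx => (average_eq x hx).symm

end Torus

section Caratheodory

variable {Ω Z E : Type*} [MeasurableSpace Ω] {μ : Measure Ω} [TopologicalSpace Z]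
  [TopologicalSpace.MetrizableSpace Z] [SecondCountableTopology Z] [MeasurableSpace Z]
  [OpensMeasurableSpace Z] [NormedAddCommGroup E] {g : Z → Ω → E}

theorem exists_stronglyMeasurable_uncurry_ae_eq (hmeas : ∀ z, AEStronglyMeasurable (g z) μ)
    (hcont : ∀ᵐ ω ∂μ, Continuous fun z => g z ω) :
    ∃ g' : Z → Ω → E, StronglyMeasurable (Function.uncurry g') ∧
      ∀ᵐ ω ∂μ, ∀ z, g z ω = g' z ω := by
  obtain ⟨D, countable_D, dense_D⟩ := TopologicalSpace.exists_countable_dense Z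
  have good_ae : ∀ᵐ ω ∂μ, Continuous (fun z => g z ω) ∧ ∀ z ∈ D, g z ω = (hmeas z).mk (g z) ω :=
    hcont.and ((ae_ball_iff countable_D).2 fun z _ => (hmeas z).ae_eq_mk)
  obtain ⟨A, ae_A, hA, good_on_A⟩ := good_ae.exists_measurable_mem
  refine ⟨fun z => A.indicator (g z),
    stronglyMeasurable_uncurry_of_continuous_of_stronglyMeasurable (fun ω => ?_) fun z => ?_, ?_⟩
  · by_cases hω : ω ∈ A
    · simpa only [Set.indicator_of_mem hω] using (good_on_A ω hω).1
    · simpa only [Set.indicator_of_notMem hω] using continuous_const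
  · obtain ⟨d, hdD, hdz⟩ := mem_closure_iff_seq_limit.1 (dense_D z)
    refine stronglyMeasurable_of_tendsto atTop
      (fun n => (hmeas (d n)).stronglyMeasurable_mk.indicator hA) (tendsto_pi_nhds.2 fun ω => ?_)
    by_cases hω : ω ∈ A
    · obtain ⟨continuous_ω, eq_mk⟩ := good_on_A ω hω
      simp only [Set.indicator_of_mem hω, ← eq_mk _ (hdD _)]
      exact (continuous_ω.tendsto z).comp hdz
    · simpa only [Set.indicator_of_notMem hω] using tendsto_const_nhds
  · filter_upwards [ae_A] with ω hω z
    rw [Set.indicator_of_mem hω]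

theorem aestronglyMeasurable_prod_of_ae_continuous (hmeas : ∀ z, AEStronglyMeasurable (g z) μ)
    (hcont : ∀ᵐ ω ∂μ, Continuous fun z => g z ω) {ν : Measure Z} :
    AEStronglyMeasurable (fun p : Ω × Z => g p.2 p.1) (μ.prod ν) := by
  obtain ⟨g', hg', g_eq⟩ := exists_stronglyMeasurable_uncurry_ae_eq hmeas hcont
  exact ⟨fun p => g' p.2 p.1, hg'.comp_measurable measurable_swap,
    (Measure.quasiMeasurePreserving_fst.ae g_eq).mono fun p hp => hp p.2⟩

theorem aestronglyMeasurable_comp_of_ae_continuous (hmeas : ∀ z, AEStronglyMeasurable (g z) μ)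
    (hcont : ∀ᵐ ω ∂μ, Continuous fun z => g z ω) {w : Ω → Z} (hw : AEMeasurable w μ) :
    AEStronglyMeasurable (fun ω => g (w ω) ω) μ := by
  obtain ⟨g', hg', g_eq⟩ := exists_stronglyMeasurable_uncurry_ae_eq hmeas hcont
  exact ((hg'.aestronglyMeasurable (μ := μ.map fun ω => (w ω, ω))).comp_aemeasurable
    (hw.prodMk aemeasurable_id)).congr (g_eq.mono fun ω hω => (hω (w ω)).symm)

end Caratheodory

section Admissible

/-- The admissible functions `h(x, ω, y)` of stochastic two-scale convergence on `Q × Ω × ℝ^ι`: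
up to a `μ`-null set of `ω`, they are continuous in `(x, y)`, bounded, and periodic in the fast
variable `y`. -/
structure IsAdmissible {X Ω ι E : Type*} [TopologicalSpace X] [MeasurableSpace Ω]
    [NormedAddCommGroup E] (μ : Measure Ω) (Q : Set X) (h : X → Ω → (ι → ℝ) → E) : Prop where
  aestronglyMeasurable : ∀ x ∈ Q, ∀ y, AEStronglyMeasurable (fun ω => h x ω y) μ
  continuousOn : ∀ᵐ ω ∂μ, ContinuousOn (fun p : X × (ι → ℝ) => h p.1 ω p.2) (Q ×ˢ Set.univ)
  periodic : ∀ᵐ ω ∂μ, ∀ x ∈ Q, IsIntPeriodic (h x ω)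
  bounded : ∃ C, ∀ᵐ ω ∂μ, ∀ x ∈ Q, ∀ y, ‖h x ω y‖ ≤ C

namespace IsAdmissible

variable {X Ω ι E : Type*} [TopologicalSpace X] [MeasurableSpace Ω] [NormedAddCommGroup E]
  {μ : Measure Ω} {Q : Set X} {h : X → Ω → (ι → ℝ) → E}

theorem sum {J : Type*} {s : Finset J} {h : J → X → Ω → (ι → ℝ) → E}
    (hh : ∀ j ∈ s, IsAdmissible μ Q (h j)) :
    IsAdmissible μ Q fun x ω y => ∑ j ∈ s, h j x ω y where
  aestronglyMeasurable x hx y :=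
    s.aestronglyMeasurable_fun_sum fun j hj => (hh j hj).aestronglyMeasurable x hx y
  continuousOn := by
    filter_upwards [(ae_ball_iff s.countable_toSet).2 fun j hj => (hh j hj).continuousOn] with ω hω
    exact continuousOn_finsetSum s hω
  periodic := by
    filter_upwards [(ae_ball_iff s.countable_toSet).2 fun j hj => (hh j hj).periodic] with ω hω
    exact fun x hx y k => Finset.sum_congr rfl fun j hj => hω j hj x hx y k
  bounded := by
    choose! C hC using fun j hj => (hh j hj).bounded
    refine ⟨∑ j ∈ s, C j, ?_⟩
    filter_upwards [(ae_ball_iff s.countable_toSet).2 hC] with ω hω x hx y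
    exact norm_sum_le_of_le s fun j hj => hω j hj x hx y

theorem pi [SecondCountableTopology E] {J : Type*} [Fintype J] {h : J → X → Ω → (ι → ℝ) → E}
    (hh : ∀ j, IsAdmissible μ Q (h j)) : IsAdmissible μ Q fun x ω y j => h j x ω y where
  aestronglyMeasurable x hx y := by
    borelize E
    exact (aemeasurable_pi_lambda _ fun j =>
      ((hh j).aestronglyMeasurable x hx y).aemeasurable).aestronglyMeasurable
  continuousOn := by
    filter_upwards [ae_all_iff.2 fun j => (hh j).continuousOn] with ω hω
    exact continuousOn_pi.2 hω
  periodic := by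
    filter_upwards [ae_all_iff.2 fun j => (hh j).periodic] with ω hω
    exact fun x hx y k => funext fun j => hω j x hx y k
  bounded := by
    choose C hC using fun j => (hh j).bounded
    refine ⟨‖C‖, ?_⟩
    filter_upwards [ae_all_iff.2 hC] with ω hω x hx y
    exact (pi_norm_le_iff_of_nonneg (norm_nonneg _)).2 fun j =>
      (hω j x hx y).trans ((le_abs_self _).trans (norm_le_pi_norm C j))

theorem tensor {φ : X → ℝ} {ψ : Ω → ℝ} {g : (ι → ℝ) → ℝ} (hφ : ContinuousOn φ Q)
    (hφb : ∃ C, ∀ x ∈ Q, |φ x| ≤ C) (hψ : AEStronglyMeasurable ψ μ)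
    (hψb : ∃ C, ∀ᵐ ω ∂μ, |ψ ω| ≤ C) (hg : Continuous g) (hper : IsIntPeriodic g) :
    IsAdmissible μ Q fun x ω y => φ x * ψ ω * g y where
  aestronglyMeasurable x _ y := (hψ.const_mul (φ x)).mul_const (g y)
  continuousOn := .of_forall fun ω =>
    ((hφ.comp continuousOn_fst fun _ hp => hp.1).mul continuousOn_const).mul
      (hg.comp continuous_snd).continuousOn
  periodic := .of_forall fun ω x _ y k => congrArg (φ x * ψ ω * ·) (hper y k)
  bounded := by
    obtain ⟨a, ha⟩ := hφb
    obtain ⟨b, hb⟩ := hψb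
    obtain ⟨c, hc⟩ := hper.exists_norm_le hg
    refine ⟨a * b * c, ?_⟩
    filter_upwards [hb] with ω hω x hx y
    have ha₀ := (abs_nonneg _).trans (ha x hx)
    have hb₀ := (abs_nonneg _).trans hω
    rw [norm_mul, norm_mul]
    exact mul_le_mul (mul_le_mul (ha x hx) hω (abs_nonneg _) ha₀) (hc y) (norm_nonneg _)
      (mul_nonneg ha₀ hb₀)

theorem comp_integrand {W : Type*} [NormedAddCommGroup W] [ProperSpace W]
    {f : X → Ω → (ι → ℝ) → W → E} {b : W → ℝ} {v : X → Ω → (ι → ℝ) → W}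
    (hfm : ∀ x y lam, AEStronglyMeasurable (fun ω => f x ω y lam) μ)
    (hfc : ∀ᵐ ω ∂μ, Continuous fun q : X × (ι → ℝ) × W => f q.1 ω q.2.1 q.2.2)
    (hfp : ∀ᵐ ω ∂μ, ∀ x lam, IsIntPeriodic fun y => f x ω y lam)
    (hb : Continuous b) (hfb : ∀ᵐ ω ∂μ, ∀ x y lam, ‖f x ω y lam‖ ≤ b lam)
    (hv : IsAdmissible μ Q v) : IsAdmissible μ Q fun x ω y => f x ω y (v x ω y) where
  aestronglyMeasurable x hx y := by
    borelize W
    exact aestronglyMeasurable_comp_of_ae_continuous (hfm x y)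
      (hfc.mono fun ω hω => hω.comp (by fun_prop : Continuous fun lam : W => (x, y, lam)))
      (hv.aestronglyMeasurable x hx y).aemeasurable
  continuousOn := by
    filter_upwards [hfc, hv.continuousOn] with ω hfω hvω
    exact hfω.comp_continuousOn (continuousOn_fst.prodMk (continuousOn_snd.prodMk hvω))
  periodic := by
    filter_upwards [hfp, hv.periodic] with ω hfω hvω x hx y k
    simp only [hvω x hx y k, hfω x _ y k]
  bounded := by
    obtain ⟨R, hR⟩ := hv.bounded
    obtain ⟨C, hC⟩ := (isCompact_closedBall (0 : W) R).bddAbove_image hb.continuousOn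
    refine ⟨C, ?_⟩
    filter_upwards [hR, hfb] with ω hRω hfω x hx y
    exact (hfω x y _).trans
      (hC (Set.mem_image_of_mem b (mem_closedBall_zero_iff.2 (hRω x hx y))))

section Integral

variable [NormedSpace ℝ E]

theorem isIntPeriodic_integral (hh : IsAdmissible μ Q h) {x : X} (hx : x ∈ Q) :
    IsIntPeriodic fun y => ∫ ω, h x ω y ∂μ :=
  fun y k => integral_congr_ae (hh.periodic.mono fun _ hω => hω x hx y k)

theorem integral_comp_measurePreserving (hh : IsAdmissible μ Q h) {S : Ω → Ω}
    (hS : MeasurePreserving S μ μ) {x : X} (hx : x ∈ Q) (y : ι → ℝ) :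
    ∫ ω, h x (S ω) y ∂μ = ∫ ω, h x ω y ∂μ := by
  have hmeas := hh.aestronglyMeasurable x hx y
  rw [← hS.map_eq] at hmeas
  rw [← integral_map hS.aemeasurable hmeas, hS.map_eq]

variable [IsFiniteMeasure μ]

theorem continuousOn_integral [Countable ι] [FirstCountableTopology X] (hh : IsAdmissible μ Q h) :
    ContinuousOn (fun p : X × (ι → ℝ) => ∫ ω, h p.1 ω p.2 ∂μ) (Q ×ˢ Set.univ) := by
  obtain ⟨C, hC⟩ := hh.bounded
  exact continuousOn_of_dominated (fun p hp => hh.aestronglyMeasurable p.1 hp.1 p.2)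
    (fun p hp => hC.mono fun ω hω => hω p.1 hp.1 p.2) (integrable_const C) hh.continuousOn

theorem exists_norm_integral_le (hh : IsAdmissible μ Q h) :
    ∃ C, ∀ x ∈ Q, ∀ y, ‖∫ ω, h x ω y ∂μ‖ ≤ C := by
  obtain ⟨C, hC⟩ := hh.bounded
  exact ⟨C * μ.real Set.univ, fun x hx y =>
    norm_integral_le_of_norm_le_const (hC.mono fun ω hω => hω x hx y)⟩

theorem integral_integral_comm [Countable ι] (hh : IsAdmissible μ Q h) {ν : Measure (ι → ℝ)}
    [IsFiniteMeasure ν] {x : X} (hx : x ∈ Q) :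
    ∫ y, ∫ ω, h x ω y ∂μ ∂ν = ∫ ω, ∫ y, h x ω y ∂ν ∂μ := by
  obtain ⟨C, hC⟩ := hh.bounded
  have continuous_section : ∀ᵐ ω ∂μ, Continuous (h x ω) :=
    hh.continuousOn.mono fun ω hω => hω.comp_continuous (f := fun y => (x, y)) (by fun_prop)
      fun _ => ⟨hx, trivial⟩
  have hint : Integrable (Function.uncurry (h x)) (μ.prod ν) :=
    .of_bound (aestronglyMeasurable_prod_of_ae_continuous (hh.aestronglyMeasurable x hx)
      continuous_section) C
      ((Measure.quasiMeasurePreserving_fst.ae hC).mono fun p hp => hp x hx p.2)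
  exact (integral_integral_swap hint).symm

theorem tendsto_integral [CompleteSpace E] [Fintype ι] {Q : Set (ι → ℝ)}
    {h : (ι → ℝ) → Ω → (ι → ℝ) → E} (hh : IsAdmissible μ Q h) (hQ : MeasurableSet Q)
    (hQfin : volume Q ≠ ∞) {T : (ι → ℝ) → Ω → Ω} (hT : ∀ z, MeasurePreserving (T z) μ μ) :
    Tendsto (fun ε : ℝ => ∫ x in Q, ∫ ω, h x (T (ε⁻¹ • x) ω) ((ε ^ 2)⁻¹ • x) ∂μ) (𝓝[≠] 0)
      (𝓝 (∫ x in Q, ∫ ω, (∫ y in Set.Icc 0 1, h x ω y) ∂μ)) := by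
  have tendsto_sq : Tendsto (fun ε : ℝ => ε ^ 2) (𝓝[≠] 0) (𝓝[≠] 0) :=
    ((continuous_pow 2).tendsto' 0 0 (by norm_num)).inf
      (tendsto_principal_principal.2 fun ε hε => pow_ne_zero 2 hε)
  obtain ⟨C, hC⟩ := hh.exists_norm_integral_le
  have tendsto_mean := (tendsto_setIntegral_oscillating (F := fun x y => ∫ ω, h x ω y ∂μ) hQ hQfin
    hh.continuousOn_integral hC fun x hx => hh.isIntPeriodic_integral hx).comp tendsto_sq
  rw [setIntegral_congr_fun hQ fun x hx => hh.integral_integral_comm hx] at tendsto_mean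
  exact tendsto_mean.congr fun ε => setIntegral_congr_fun hQ fun x hx =>
    (hh.integral_comp_measurePreserving (hT (ε⁻¹ • x)) hx _).symm

end Integral

end IsAdmissible

end Admissible

section OscillatingEnergies

theorem ae_forall_of_ae_prod_of_isClosed {Ω Y : Type*} [MeasurableSpace Ω] {μ : Measure Ω}
    [TopologicalSpace Y] [MeasurableSpace Y] {ν : Measure Y} [SFinite ν] [ν.IsOpenPosMeasure]
    {p : Ω → Y → Prop} (hp : ∀ᵐ q ∂μ.prod ν, p q.1 q.2)
    (hclosed : ∀ᵐ ω ∂μ, IsClosed {y | p ω y}) : ∀ᵐ ω ∂μ, ∀ y, p ω y := by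
  filter_upwards [Measure.ae_ae_of_ae_prod hp, hclosed] with ω hω hclosedω y
  exact hclosedω.closure_subset (Measure.dense_of_ae hω y)

theorem continuous_young_growth {N : ℕ} {Φ : ℝ → ℝ} (hΦ : IsYoung Φ) (c : ℝ) :
    Continuous fun lam : Fin N → ℝ => c * (1 + Φ (enorm2 lam)) := by
  have continuous_enorm2 : Continuous fun lam : Fin N → ℝ => enorm2 lam := by
    unfold enorm2
    fun_prop
  have continuous_young : Continuous fun lam : Fin N → ℝ => Φ (enorm2 lam) :=
    hΦ.1.comp_continuous continuous_enorm2 fun _ => Real.sqrt_nonneg _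
  exact continuous_const.mul (continuous_const.add continuous_young)

theorem norm_le_of_young_growth {N : ℕ} {Φ : ℝ → ℝ} (hΦ : IsYoung Φ) {c₁ c₂ a : ℝ}
    (hc₁ : 0 ≤ c₁) {lam : Fin N → ℝ}
    (ha : c₁ * Φ (enorm2 lam) ≤ a ∧ a ≤ c₂ * (1 + Φ (enorm2 lam))) :
    ‖a‖ ≤ c₂ * (1 + Φ (enorm2 lam)) := by
  obtain ⟨-, -, -, -, Φ_nonneg, -⟩ := hΦ
  have ha₀ : 0 ≤ a := (mul_nonneg hc₁ (Φ_nonneg _ (Real.sqrt_nonneg _))).trans ha.1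
  rw [Real.norm_of_nonneg ha₀]
  exact ha.2

theorem isAdmissible_tensor_sum {X ι J K Ω : Type*} [PseudoMetricSpace X] [ProperSpace X]
    [Fintype J] [Fintype K] [MeasurableSpace Ω] {μ : Measure Ω} {Q : Set X}
    (hQ : Bornology.IsBounded Q) {φ : J → K → X → ℝ} {ψ : J → K → Ω → ℝ} {g : J → K → (ι → ℝ) → ℝ}
    (hφ : ∀ j i, ContinuousOn (φ j i) (closure Q))
    (hψ : ∀ j i, Measurable (ψ j i) ∧ ∃ C : ℝ, ∀ ω, |ψ j i ω| ≤ C)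
    (hg : ∀ j i, Continuous (g j i) ∧ IsIntPeriodic (g j i)) :
    IsAdmissible μ Q fun x ω y j => ∑ i, φ j i x * ψ j i ω * g j i y := by
  refine .pi fun j => .sum fun i _ => ?_
  obtain ⟨C, hC⟩ := hQ.isCompact_closure.exists_bound_of_continuousOn (hφ j i)
  obtain ⟨D, hD⟩ := (hψ j i).2
  exact .tensor ((hφ j i).mono subset_closure) ⟨C, fun x hx => hC x (subset_closure hx)⟩
    (hψ j i).1.aestronglyMeasurable ⟨D, .of_forall hD⟩ (hg j i).1 (hg j i).2

theorem stmt5_general {ι Ω W E : Type*} [Fintype ι] [MeasurableSpace Ω] {μ : Measure Ω}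
    [IsFiniteMeasure μ] [NormedAddCommGroup W] [ProperSpace W] [NormedAddCommGroup E]
    [NormedSpace ℝ E] [CompleteSpace E]
    {T : (ι → ℝ) → Ω → Ω} (hT : ∀ z, MeasurePreserving (T z) μ μ)
    {Q : Set (ι → ℝ)} (hQ : MeasurableSet Q) (hQfin : volume Q ≠ ∞)
    {f : (ι → ℝ) → Ω → (ι → ℝ) → W → E}
    (hfm : ∀ x y lam, AEStronglyMeasurable (fun ω => f x ω y lam) μ)
    (hfc : ∀ᵐ ω ∂μ, Continuous fun q : (ι → ℝ) × (ι → ℝ) × W => f q.1 ω q.2.1 q.2.2)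
    (hfp : ∀ᵐ ω ∂μ, ∀ x lam, IsIntPeriodic fun y => f x ω y lam)
    {b : W → ℝ} (hb : Continuous b)
    (hfb : ∀ᵐ p ∂(μ.prod (volume : Measure (ι → ℝ))), ∀ x lam, ‖f x p.1 p.2 lam‖ ≤ b lam)
    {v : (ι → ℝ) → Ω → (ι → ℝ) → W} (hv : IsAdmissible μ Q v) :
    Tendsto
      (fun ε : ℝ => ∫ x in Q, ∫ ω,
        f x (T (ε⁻¹ • x) ω) ((ε ^ 2)⁻¹ • x) (v x (T (ε⁻¹ • x) ω) ((ε ^ 2)⁻¹ • x)) ∂μ)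
      (𝓝[≠] 0) (𝓝 (∫ x in Q, ∫ ω, (∫ y in Set.Icc 0 1, f x ω y (v x ω y)) ∂μ)) := by
  have isClosed_bound : ∀ᵐ ω ∂μ, IsClosed {y | ∀ x lam, ‖f x ω y lam‖ ≤ b lam} := by
    filter_upwards [hfc] with ω hω
    simp only [Set.ofPred_forall]
    exact isClosed_iInter fun x => isClosed_iInter fun lam => isClosed_le
      (hω.comp (by fun_prop : Continuous fun y : ι → ℝ => (x, y, lam))).norm continuous_const
  have hfb_all := (ae_forall_of_ae_prod_of_isClosed hfb isClosed_bound).mono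
    fun ω hω x y lam => hω y x lam
  exact (hv.comp_integrand hfm hfc hfp hb hfb_all).tendsto_integral hQ hQfin hT

end OscillatingEnergies

/-- convergence of oscillating energies for admissible test vector fields. -/
theorem stmt5 {N : ℕ} (hN : 1 ≤ N) {Ω : Type*} [MeasurableSpace Ω] (μ : Measure Ω)
    [IsProbabilityMeasure μ]
    (Φ : ℝ → ℝ) (hΦ : IsYoung Φ) (hΦ2 : Delta2 Φ) (hΦc2 : Delta2 (conjY Φ))
    (T : (Fin N → ℝ) → Ω → Ω) (hT : IsDynSys μ T)
    (Q : Set (Fin N → ℝ)) (hQo : IsOpen Q) (hQb : Bornology.IsBounded Q)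
    (f : (Fin N → ℝ) → Ω → (Fin N → ℝ) → (Fin N → ℝ) → ℝ)
    (hfmeas : ∀ x lam : Fin N → ℝ, Measurable fun p : Ω × (Fin N → ℝ) => f x p.1 p.2 lam)
    (hfcont : ∀ᵐ ω ∂μ, Continuous fun q : (Fin N → ℝ) × (Fin N → ℝ) × (Fin N → ℝ) =>
      f q.1 ω q.2.1 q.2.2)
    (hH1 : ∃ ϖ : ℝ → ℝ, Continuous ϖ ∧ ϖ 0 = 0 ∧ (∀ t, 0 ≤ ϖ t) ∧
      ∃ a : (Fin N → ℝ) → ℝ, LocallyIntegrable a volume ∧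
        ∀ᵐ p ∂(μ.prod (volume : Measure (Fin N → ℝ))), ∀ x x' lam : Fin N → ℝ,
          |f x p.1 p.2 lam - f x' p.1 p.2 lam| ≤ ϖ (enorm2 (x - x')) * (a p.2 + f x p.1 p.2 lam))
    (hH2 : ∀ᵐ p ∂(μ.prod (volume : Measure (Fin N → ℝ))), ∀ x : Fin N → ℝ,
      StrictConvexOn ℝ Set.univ (f x p.1 p.2))
    (c₁ c₂ : ℝ) (hc₁ : 0 < c₁) (hc₂ : 0 < c₂)
    (hH3 : ∀ᵐ p ∂(μ.prod (volume : Measure (Fin N → ℝ))), ∀ x lam : Fin N → ℝ,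
      c₁ * Φ (enorm2 lam) ≤ f x p.1 p.2 lam ∧ f x p.1 p.2 lam ≤ c₂ * (1 + Φ (enorm2 lam)))
    (hH4 : ∀ᵐ ω ∂μ, ∀ (x y lam : Fin N → ℝ) (k : Fin N → ℤ),
      f x ω (y + fun i => (k i : ℝ)) lam = f x ω y lam)
    (m : ℕ) (φv : Fin N → Fin m → (Fin N → ℝ) → ℝ) (ψv : Fin N → Fin m → Ω → ℝ)
    (gv : Fin N → Fin m → (Fin N → ℝ) → ℝ)
    (hφv : ∀ j i, ContinuousOn (φv j i) (closure Q))
    (hψv : ∀ j i, Measurable (ψv j i) ∧ ∃ C : ℝ, ∀ ω, |ψv j i ω| ≤ C)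
    (hgv : ∀ j i, Continuous (gv j i) ∧ ZPeriodic (gv j i)) :
    Tendsto
      (fun ε : ℝ => ∫ x in Q, (∫ ω,
        f x (T (ε⁻¹ • x) ω) ((ε ^ 2)⁻¹ • x)
          (fun j => ∑ i, φv j i x * ψv j i (T (ε⁻¹ • x) ω) * gv j i ((ε ^ 2)⁻¹ • x)) ∂μ))
      (nhdsWithin 0 (Set.Ioi 0))
      (nhds (∫ x in Q, (∫ ω, (∫ y in Ycube N,
        f x ω y (fun j => ∑ i, φv j i x * ψv j i ω * gv j i y)) ∂μ))) := by
  exact (stmt5_general (f := f) hT.2.2.1 hQo.measurableSet hQb.measure_lt_top.ne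
    (fun x y lam => ((hfmeas x lam).comp measurable_prodMk_right).aestronglyMeasurable) hfcont
    (hH4.mono fun _ hω x lam y k => hω x y lam k) (continuous_young_growth hΦ c₂)
    (hH3.mono fun _ hp x lam => norm_le_of_young_growth hΦ hc₁.le (hp x lam))
    (isAdmissible_tensor_sum hQb hφv hψv hgv)).mono_left (nhdsGT_le_nhdsNE 0)
end
end

section
/- Let Φ be a Young function with conjugate Φ̃, and let f satisfy (H₁)–(H₃) with the constant c₂ from (H₃). Then for all measurable vector fields v, w : Q×Ω×ℝ^N → ℝ^N that are ℤ^N-periodic in the last variable, one has ∫_{Q×Ω×Y} |f(x,ω,y,v(x,ω,y)) − f(x,ω,y,w(x,ω,y))| dx dμ(ω) dy ≤ 4Nc₂ · ‖(1 + Φ(2(1+|v|+|w|)))/(1+|v|+|w|)‖_{Φ̃,Q×Ω×Y} · ‖|v−w|‖_{Φ,Q×Ω×Y} (the right-hand side being possibly +∞). -/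
open MeasureTheory Filter Topology ENNReal

noncomputable section

/-!
The argument is pointwise: if `g ≥ 0` is convex and `g z ≤ H (p z)` for a seminorm `p` and a
nondecreasing `H`, then prolonging the segment from `w` to `v` beyond `v` by a further `p`-length
`M ≥ p v` reaches a point `z` with `p z ≤ 2 * M`, and convexity along the segment gives
`g v - g w ≤ (H (2 * M) / M) * p (v - w)`. With `M = 1 + p v + p w` this bounds the difference of
the integrands by a product, to which Hölder's inequality for Luxemburg norms applies.
-/

namespace IsYoung

variable {Φ : ℝ → ℝ}

lemma continuousOn (hΦ : IsYoung Φ) : ContinuousOn Φ (Set.Ici 0) := hΦ.1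

lemma nonneg (hΦ : IsYoung Φ) {t : ℝ} (ht : 0 ≤ t) : 0 ≤ Φ t := hΦ.2.2.2.2.1 t ht

lemma monotoneOn_s6 (hΦ : IsYoung Φ) : MonotoneOn Φ (Set.Ici 0) := by
  obtain ⟨-, hconvex, hzero, -, hnonneg, -, -⟩ := hΦ
  intro s hs t ht hst
  rcases (Set.mem_Ici.1 hs).eq_or_lt with rfl | hs_pos
  · exact hzero.le.trans (hnonneg t ht)
  · exact hconvex.le_right_of_left_le'' Set.self_mem_Ici ht hs_pos hst
      (hzero.le.trans (hnonneg s hs))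

lemma bddAbove_conjY (hΦ : IsYoung Φ) (t : ℝ) :
    BddAbove ((fun s => s * t - Φ s) '' Set.Ici 0) := by
  obtain ⟨-, -, -, -, hnonneg, -, hsuperlinear⟩ := hΦ
  obtain ⟨R, hR⟩ := (hsuperlinear.eventually_ge_atTop t).exists_forall_of_atTop
  refine ⟨|R| * |t|, ?_⟩
  rintro _ ⟨s, hs : 0 ≤ s, rfl⟩
  have hΦs := hnonneg s hs
  rcases le_or_gt s |R| with hsR | hRs
  · calc s * t - Φ s ≤ s * |t| := by linarith [mul_le_mul_of_nonneg_left (le_abs_self t) hs]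
      _ ≤ |R| * |t| := by gcongr
  · have hs_pos : 0 < s := (abs_nonneg R).trans_lt hRs
    have hts : t * s ≤ Φ s := (le_div_iff₀ hs_pos).1 (hR s ((le_abs_self R).trans hRs.le))
    calc s * t - Φ s ≤ 0 := by linarith
      _ ≤ |R| * |t| := by positivity

lemma mul_le_add_conjY (hΦ : IsYoung Φ) {s : ℝ} (hs : 0 ≤ s) (t : ℝ) :
    s * t ≤ Φ s + conjY Φ t :=
  sub_le_iff_le_add'.1 (le_csSup (hΦ.bddAbove_conjY t) ⟨s, hs, rfl⟩)

end IsYoung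

section Luxemburg

variable {X : Type*} [MeasurableSpace X] {ν : Measure X} {Φ Ψ : ℝ → ℝ} {u g : X → ℝ}

lemma aemeasurable_comp_of_continuousOn_Ici (hΦ : ContinuousOn Φ (Set.Ici 0))
    (hu : AEMeasurable u ν) (hu_nonneg : ∀ x, 0 ≤ u x) : AEMeasurable (fun x => Φ (u x)) ν := by
  have hcont : Continuous fun t : ℝ => Φ (max t 0) :=
    hΦ.comp_continuous (by fun_prop) fun t => le_max_right t 0
  simpa only [Function.comp_def, max_eq_left (hu_nonneg _)] using
    hcont.measurable.comp_aemeasurable hu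

lemma exists_lintegral_le_one_of_luxNorm_lt {d : ℝ≥0∞} (hd : luxNorm Φ ν u < d) :
    ∃ δ : ℝ, 0 < δ ∧ ENNReal.ofReal δ < d ∧ ∫⁻ x, ENNReal.ofReal (Φ (|u x| / δ)) ∂ν ≤ 1 := by
  obtain ⟨_, ⟨δ, hδ, rfl, hle⟩, hlt⟩ := sInf_lt_iff.1 hd
  exact ⟨δ, hδ, hlt, hle⟩

lemma lintegral_abs_sub_le_of_lintegral_le_one {b δ ε : ℝ} (hΦ : ∀ t, 0 ≤ t → t ≤ Φ t + b)
    (hδ : 0 < δ) (hδε : δ * b ≤ ε) (hle : ∫⁻ x, ENNReal.ofReal (Φ (|u x| / δ)) ∂ν ≤ 1) :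
    ∫⁻ x, ENNReal.ofReal (|u x| - ε) ∂ν ≤ ENNReal.ofReal δ := by
  have hpoint (x : X) : |u x| - ε ≤ δ * Φ (|u x| / δ) := by
    have h := (div_le_iff₀' hδ).1 (hΦ (|u x| / δ) (by positivity))
    linarith
  calc ∫⁻ x, ENNReal.ofReal (|u x| - ε) ∂ν
      ≤ ∫⁻ x, ENNReal.ofReal δ * ENNReal.ofReal (Φ (|u x| / δ)) ∂ν :=
        lintegral_mono fun x =>
          (ENNReal.ofReal_le_ofReal (hpoint x)).trans_eq (ENNReal.ofReal_mul hδ.le)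
    _ = ENNReal.ofReal δ * ∫⁻ x, ENNReal.ofReal (Φ (|u x| / δ)) ∂ν :=
        lintegral_const_mul' _ _ ENNReal.ofReal_ne_top
    _ ≤ ENNReal.ofReal δ := mul_le_of_le_one_right' hle

lemma ae_eq_zero_of_luxNorm_eq_zero {b : ℝ} (hΦ : ∀ t, 0 ≤ t → t ≤ Φ t + b)
    (hu : AEMeasurable u ν) (hzero : luxNorm Φ ν u = 0) : u =ᵐ[ν] 0 := by
  have hlint {ε : ℝ} (hε : 0 < ε) : ∫⁻ x, ENNReal.ofReal (|u x| - ε) ∂ν = 0 := by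
    refine le_antisymm (le_of_forall_gt_imp_ge_of_dense fun d hd => ?_) zero_le
    have hbound : luxNorm Φ ν u < min d (ENNReal.ofReal (ε / (|b| + 1))) := by
      rw [hzero]
      exact lt_min hd (ENNReal.ofReal_pos.2 (by positivity))
    obtain ⟨δ, hδ, hlt, hle⟩ := exists_lintegral_le_one_of_luxNorm_lt hbound
    have hδb : δ * (|b| + 1) < ε := (lt_div_iff₀ (by positivity)).1
      ((ENNReal.ofReal_lt_ofReal_iff (by positivity)).1 (hlt.trans_le (min_le_right _ _)))
    have hδε : δ * b ≤ ε := by nlinarith [le_abs_self b]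
    exact (lintegral_abs_sub_le_of_lintegral_le_one hΦ hδ hδε hle).trans
      (hlt.le.trans (min_le_left _ _))
  have hsmall (n : ℕ) : ∀ᵐ x ∂ν, |u x| ≤ 1 / ((n : ℝ) + 1) := by
    filter_upwards [(lintegral_eq_zero_iff' (by fun_prop)).1
      (hlint (Nat.one_div_pos_of_nat (n := n)))] with x hx
    exact sub_nonpos.1 (ENNReal.ofReal_eq_zero.1 hx)
  filter_upwards [ae_all_iff.2 hsmall] with x hx
  exact abs_nonpos_iff.1 (ge_of_tendsto' tendsto_one_div_add_atTop_nhds_zero_nat hx)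

lemma lintegral_mul_le_of_lintegral_le_one {δ η : ℝ}
    (hyoung : ∀ s t, 0 ≤ s → 0 ≤ t → s * t ≤ Φ s + Ψ t) (hδ : 0 < δ) (hη : 0 < η)
    (hΦu : AEMeasurable (fun x => Φ (|u x| / η)) ν)
    (hg_le : ∫⁻ x, ENNReal.ofReal (Ψ (|g x| / δ)) ∂ν ≤ 1)
    (hu_le : ∫⁻ x, ENNReal.ofReal (Φ (|u x| / η)) ∂ν ≤ 1) :
    ∫⁻ x, ENNReal.ofReal (|g x| * |u x|) ∂ν ≤ 2 * ENNReal.ofReal δ * ENNReal.ofReal η := by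
  have hpoint (x : X) : |g x| * |u x| ≤ δ * η * (Φ (|u x| / η) + Ψ (|g x| / δ)) := by
    calc |g x| * |u x| = δ * η * (|u x| / η * (|g x| / δ)) := by field_simp
      _ ≤ _ := by gcongr; exact hyoung _ _ (by positivity) (by positivity)
  calc ∫⁻ x, ENNReal.ofReal (|g x| * |u x|) ∂ν
      ≤ ∫⁻ x, ENNReal.ofReal (δ * η) *
          (ENNReal.ofReal (Φ (|u x| / η)) + ENNReal.ofReal (Ψ (|g x| / δ))) ∂ν := by
        refine lintegral_mono fun x => (ENNReal.ofReal_le_ofReal (hpoint x)).trans ?_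
        rw [ENNReal.ofReal_mul (by positivity)]
        gcongr
        exact ENNReal.ofReal_add_le
    _ = ENNReal.ofReal (δ * η) * (∫⁻ x, ENNReal.ofReal (Φ (|u x| / η)) ∂ν +
          ∫⁻ x, ENNReal.ofReal (Ψ (|g x| / δ)) ∂ν) := by
        rw [lintegral_const_mul' _ _ ENNReal.ofReal_ne_top,
          lintegral_add_left' hΦu.ennreal_ofReal]
    _ ≤ ENNReal.ofReal (δ * η) * (1 + 1) := by gcongr
    _ = 2 * ENNReal.ofReal δ * ENNReal.ofReal η := by
        rw [ENNReal.ofReal_mul hδ.le, one_add_one_eq_two]; ring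

theorem lintegral_mul_le_two_mul_luxNorm_mul_luxNorm
    (hyoung : ∀ s t, 0 ≤ s → 0 ≤ t → s * t ≤ Φ s + Ψ t) (hΦ : ContinuousOn Φ (Set.Ici 0))
    (hg : AEMeasurable g ν) (hu : AEMeasurable u ν) :
    ∫⁻ x, ENNReal.ofReal (|g x| * |u x|) ∂ν ≤ 2 * luxNorm Ψ ν g * luxNorm Φ ν u := by
  -- Vanishing norms are treated apart because the other factor may be `∞`, and `0 * ∞ = 0`.
  rcases eq_or_ne (luxNorm Ψ ν g) 0 with hg_zero | hg_ne
  · have hg_ae := ae_eq_zero_of_luxNorm_eq_zero (b := Φ 1)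
      (fun t ht => by linarith [hyoung 1 t zero_le_one ht]) hg hg_zero
    refine (lintegral_eq_zero_of_ae_eq_zero ?_).trans_le zero_le
    filter_upwards [hg_ae] with x hx
    simp [hx]
  rcases eq_or_ne (luxNorm Φ ν u) 0 with hu_zero | hu_ne
  · have hu_ae := ae_eq_zero_of_luxNorm_eq_zero (b := Ψ 1)
      (fun t ht => by linarith [hyoung t 1 ht zero_le_one]) hu hu_zero
    refine (lintegral_eq_zero_of_ae_eq_zero ?_).trans_le zero_le
    filter_upwards [hu_ae] with x hx
    simp [hx]
  rw [mul_assoc, mul_left_comm]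
  refine ENNReal.le_mul_of_forall_lt (.inl hg_ne) (.inr (mul_ne_zero two_ne_zero hu_ne))
    fun d hd e he => ?_
  have he_half : luxNorm Φ ν u < e / 2 := by
    rwa [ENNReal.lt_div_iff_mul_lt (by simp) (by simp), mul_comm]
  obtain ⟨δ, hδ, hδd, hg_le⟩ := exists_lintegral_le_one_of_luxNorm_lt hd
  obtain ⟨η, hη, hηe, hu_le⟩ := exists_lintegral_le_one_of_luxNorm_lt he_half
  have hΦu : AEMeasurable (fun x => Φ (|u x| / η)) ν :=
    aemeasurable_comp_of_continuousOn_Ici hΦ (by fun_prop) fun x => by positivity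
  calc ∫⁻ x, ENNReal.ofReal (|g x| * |u x|) ∂ν
      ≤ 2 * ENNReal.ofReal δ * ENNReal.ofReal η :=
        lintegral_mul_le_of_lintegral_le_one hyoung hδ hη hΦu hg_le hu_le
    _ ≤ 2 * d * (e / 2) := by gcongr
    _ = d * e := by rw [mul_comm 2 d, mul_assoc, ENNReal.mul_div_cancel two_ne_zero ofNat_ne_top]

end Luxemburg

section Convex

variable {E : Type*} [AddCommGroup E] [Module ℝ E] {g : E → ℝ}

lemma sub_le_mul_sub_of_convexOn (hg : ConvexOn ℝ Set.univ g) (v w : E) {t : ℝ} (ht : 0 < t) :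
    g v - g w ≤ t * (g (v + t⁻¹ • (v - w)) - g v) := by
  set z := v + t⁻¹ • (v - w) with hz
  have hcomb : (t / (1 + t)) • z + (1 / (1 + t)) • w = v := by
    rw [hz]
    match_scalars <;> field_simp <;> ring
  have hle := hg.2 (Set.mem_univ z) (Set.mem_univ w) (show 0 ≤ t / (1 + t) by positivity)
    (show 0 ≤ 1 / (1 + t) by positivity) (by field_simp; ring)
  rw [hcomb, smul_eq_mul, smul_eq_mul, div_mul_eq_mul_div, div_mul_eq_mul_div, ← add_div,
    le_div_iff₀ (by positivity)] at hle
  linarith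

variable (p : Seminorm ℝ E) {H : ℝ → ℝ}

lemma sub_le_div_mul_seminorm_of_convexOn (hg : ConvexOn ℝ Set.univ g) (hg_nonneg : ∀ z, 0 ≤ g z)
    (hH : MonotoneOn H (Set.Ici 0)) (hgH : ∀ z, g z ≤ H (p z)) (v w : E) {M : ℝ} (hM : 0 < M)
    (hv : p v ≤ M) : g v - g w ≤ H (2 * M) / M * p (v - w) := by
  -- The natural ratio `p (v - w) / M` may be `0`, so it is approached from above.
  have hstep (t : ℝ) (ht : p (v - w) / M < t) : g v - g w ≤ t * H (2 * M) := by
    have ht_pos : 0 < t := (div_nonneg (apply_nonneg p _) hM.le).trans_lt ht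
    set z := v + t⁻¹ • (v - w)
    have hz : p z ≤ 2 * M := by
      have hvw : t⁻¹ * p (v - w) ≤ M := by
        rw [inv_mul_le_iff₀ ht_pos]
        exact ((div_lt_iff₀ hM).1 ht).le
      calc p z ≤ p v + p (t⁻¹ • (v - w)) := map_add_le_add p _ _
        _ = p v + t⁻¹ * p (v - w) := by
          rw [map_smul_eq_mul, Real.norm_of_nonneg (inv_nonneg.2 ht_pos.le)]
        _ ≤ 2 * M := by linarith
    calc g v - g w ≤ t * (g z - g v) := sub_le_mul_sub_of_convexOn hg v w ht_pos
      _ ≤ t * g z := by gcongr; linarith [hg_nonneg v]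
      _ ≤ t * H (2 * M) := by
        gcongr
        exact (hgH z).trans (hH (apply_nonneg p z) (Set.mem_Ici.2 (by positivity)) hz)
  have hlim : Tendsto (fun t => t * H (2 * M)) (𝓝[>] (p (v - w) / M))
      (𝓝 (p (v - w) / M * H (2 * M))) :=
    (continuous_mul_const _).continuousWithinAt
  calc g v - g w ≤ p (v - w) / M * H (2 * M) :=
        ge_of_tendsto hlim (eventually_mem_nhdsWithin.mono hstep)
    _ = H (2 * M) / M * p (v - w) := by ring

lemma abs_sub_le_div_mul_seminorm_of_convexOn (hg : ConvexOn ℝ Set.univ g)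
    (hg_nonneg : ∀ z, 0 ≤ g z) (hH : MonotoneOn H (Set.Ici 0)) (hgH : ∀ z, g z ≤ H (p z))
    (v w : E) {M : ℝ} (hM : 0 < M) (hv : p v ≤ M) (hw : p w ≤ M) :
    |g v - g w| ≤ H (2 * M) / M * p (v - w) := by
  refine abs_sub_le_iff.2 ⟨?_, ?_⟩
  · exact sub_le_div_mul_seminorm_of_convexOn p hg hg_nonneg hH hgH v w hM hv
  · rw [map_sub_rev]
    exact sub_le_div_mul_seminorm_of_convexOn p hg hg_nonneg hH hgH w v hM hw

end Convex

section Nemytskii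

variable {E : Type*} [AddCommGroup E] [Module ℝ E] {Φ : ℝ → ℝ}

lemma IsYoung.abs_sub_le_of_convexOn (hΦ : IsYoung Φ) (p : Seminorm ℝ E) {g : E → ℝ} {c : ℝ}
    (hc : 0 ≤ c) (hg : ConvexOn ℝ Set.univ g) (hg_nonneg : ∀ z, 0 ≤ g z)
    (hgΦ : ∀ z, g z ≤ c * (1 + Φ (p z))) (v w : E) :
    |g v - g w| ≤ c * ((1 + Φ (2 * (1 + p v + p w))) / (1 + p v + p w) * p (v - w)) := by
  have hv := apply_nonneg p v
  have hw := apply_nonneg p w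
  have hH : MonotoneOn (fun t => c * (1 + Φ t)) (Set.Ici 0) := fun s hs t ht hst => by
    have := hΦ.monotoneOn_s6 hs ht hst
    dsimp only
    gcongr
  have hbound := abs_sub_le_div_mul_seminorm_of_convexOn p hg hg_nonneg hH hgΦ v w
    (M := 1 + p v + p w) (by positivity) (by linarith) (by linarith)
  rwa [mul_div_assoc, mul_assoc] at hbound

theorem stmt6_general {X : Type*} [MeasurableSpace X] {ν : Measure X} (hΦ : IsYoung Φ)
    (p : Seminorm ℝ E) {f : X → E → ℝ} {c : ℝ} (hc : 0 ≤ c)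
    (hconvex : ∀ᵐ x ∂ν, ConvexOn ℝ Set.univ (f x)) (hnonneg : ∀ᵐ x ∂ν, ∀ z, 0 ≤ f x z)
    (hgrowth : ∀ᵐ x ∂ν, ∀ z, f x z ≤ c * (1 + Φ (p z))) {v w : X → E}
    (hv : AEMeasurable (fun x => p (v x)) ν) (hw : AEMeasurable (fun x => p (w x)) ν)
    (hvw : AEMeasurable (fun x => p (v x - w x)) ν) :
    ∫⁻ x, ENNReal.ofReal |f x (v x) - f x (w x)| ∂ν ≤
      ENNReal.ofReal (2 * c) *
        luxNorm (conjY Φ) ν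
          (fun x => (1 + Φ (2 * (1 + p (v x) + p (w x)))) / (1 + p (v x) + p (w x))) *
        luxNorm Φ ν (fun x => p (v x - w x)) := by
  set G : X → ℝ := fun x => (1 + Φ (2 * (1 + p (v x) + p (w x)))) / (1 + p (v x) + p (w x))
  set u : X → ℝ := fun x => p (v x - w x)
  have hM : AEMeasurable (fun x => 1 + p (v x) + p (w x)) ν := (hv.const_add 1).add hw
  have hG : AEMeasurable G ν :=
    ((aemeasurable_comp_of_continuousOn_Ici hΦ.continuousOn (hM.const_mul 2)
      fun x => by positivity).const_add 1).div hM
  have hpoint : ∀ᵐ x ∂ν, |f x (v x) - f x (w x)| ≤ c * (|G x| * |u x|) := by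
    filter_upwards [hconvex, hnonneg, hgrowth] with x hx_convex hx_nonneg hx_growth
    calc |f x (v x) - f x (w x)| ≤ c * (G x * u x) :=
          hΦ.abs_sub_le_of_convexOn p hc hx_convex hx_nonneg hx_growth (v x) (w x)
      _ ≤ c * (|G x| * |u x|) := by
          rw [← abs_mul]
          gcongr
          exact le_abs_self _
  calc ∫⁻ x, ENNReal.ofReal |f x (v x) - f x (w x)| ∂ν
      ≤ ∫⁻ x, ENNReal.ofReal c * ENNReal.ofReal (|G x| * |u x|) ∂ν :=
        lintegral_mono_ae <| hpoint.mono fun x hx =>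
          (ENNReal.ofReal_le_ofReal hx).trans_eq (ENNReal.ofReal_mul hc)
    _ = ENNReal.ofReal c * ∫⁻ x, ENNReal.ofReal (|G x| * |u x|) ∂ν :=
        lintegral_const_mul' _ _ ENNReal.ofReal_ne_top
    _ ≤ ENNReal.ofReal c * (2 * luxNorm (conjY Φ) ν G * luxNorm Φ ν u) := by
        gcongr
        exact lintegral_mul_le_two_mul_luxNorm_mul_luxNorm
          (fun s t hs _ => hΦ.mul_le_add_conjY hs t) hΦ.continuousOn hG hvw
    _ = ENNReal.ofReal (2 * c) * luxNorm (conjY Φ) ν G * luxNorm Φ ν u := by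
        rw [ENNReal.ofReal_mul zero_le_two, ENNReal.ofReal_ofNat]; ring

end Nemytskii

section EuclideanSeminorm

variable {N : ℕ}

lemma enorm2_eq_norm_toLp (v : Fin N → ℝ) : enorm2 v = ‖WithLp.toLp 2 v‖ := by
  simp [enorm2, EuclideanSpace.norm_eq]

variable (N) in
/-- The Euclidean norm on `Fin N → ℝ`, whose own norm is the sup norm, as a seminorm. It is built
on `enorm2` so that its values unfold definitionally to `enorm2 v`. -/
def euclideanSeminorm : Seminorm ℝ (Fin N → ℝ) :=
  Seminorm.of enorm2
    (fun v w => by simpa only [enorm2_eq_norm_toLp, WithLp.toLp_add] using norm_add_le _ _)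
    (fun a v => by simp only [enorm2_eq_norm_toLp, WithLp.toLp_smul, norm_smul])

lemma measurable_enorm2 : Measurable (enorm2 : (Fin N → ℝ) → ℝ) := by
  unfold enorm2
  fun_prop

end EuclideanSeminorm

lemma ae_prod_prod_of_ae_prod {α β γ : Type*} [MeasurableSpace α] [MeasurableSpace β]
    [MeasurableSpace γ] {ρ : Measure α} {μ : Measure β} {τ τ' : Measure γ} [SFinite μ]
    [SFinite τ] [SFinite τ'] (hτ : τ' ≪ τ) {P : β × γ → Prop}
    (hP : ∀ᵐ q ∂μ.prod τ, P q) : ∀ᵐ x ∂(ρ.prod μ).prod τ', P (x.1.2, x.2) :=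
  (Measure.quasiMeasurePreserving_snd.comp
    (measurePreserving_prodAssoc ρ μ τ').quasiMeasurePreserving).ae
    ((Measure.AbsolutelyContinuous.rfl.prod hτ).ae_le hP)

/-- continuity estimate for the Nemytskii map in Orlicz norms. -/
theorem stmt6 {N : ℕ} (hN : 1 ≤ N) {Ω : Type*} [MeasurableSpace Ω] (μ : Measure Ω)
    [IsProbabilityMeasure μ]
    (Φ : ℝ → ℝ) (hΦ : IsYoung Φ)
    (Q : Set (Fin N → ℝ)) (hQo : IsOpen Q) (hQb : Bornology.IsBounded Q)
    (f : (Fin N → ℝ) → Ω → (Fin N → ℝ) → (Fin N → ℝ) → ℝ)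
    (hfmeas : ∀ x lam : Fin N → ℝ, Measurable fun p : Ω × (Fin N → ℝ) => f x p.1 p.2 lam)
    (hfcont : ∀ᵐ ω ∂μ, Continuous fun q : (Fin N → ℝ) × (Fin N → ℝ) × (Fin N → ℝ) =>
      f q.1 ω q.2.1 q.2.2)
    (hH1 : ∃ ϖ : ℝ → ℝ, Continuous ϖ ∧ ϖ 0 = 0 ∧ (∀ t, 0 ≤ ϖ t) ∧
      ∃ a : (Fin N → ℝ) → ℝ, LocallyIntegrable a volume ∧
        ∀ᵐ p ∂(μ.prod (volume : Measure (Fin N → ℝ))), ∀ x x' lam : Fin N → ℝ,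
          |f x p.1 p.2 lam - f x' p.1 p.2 lam| ≤ ϖ (enorm2 (x - x')) * (a p.2 + f x p.1 p.2 lam))
    (hH2 : ∀ᵐ p ∂(μ.prod (volume : Measure (Fin N → ℝ))), ∀ x : Fin N → ℝ,
      StrictConvexOn ℝ Set.univ (f x p.1 p.2))
    (c₁ c₂ : ℝ) (hc₁ : 0 < c₁) (hc₂ : 0 < c₂)
    (hH3 : ∀ᵐ p ∂(μ.prod (volume : Measure (Fin N → ℝ))), ∀ x lam : Fin N → ℝ,
      c₁ * Φ (enorm2 lam) ≤ f x p.1 p.2 lam ∧ f x p.1 p.2 lam ≤ c₂ * (1 + Φ (enorm2 lam)))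
    (v w : (Fin N → ℝ) → Ω → (Fin N → ℝ) → Fin N → ℝ)
    (hvmeas : Measurable fun p : ((Fin N → ℝ) × Ω) × (Fin N → ℝ) => v p.1.1 p.1.2 p.2)
    (hwmeas : Measurable fun p : ((Fin N → ℝ) × Ω) × (Fin N → ℝ) => w p.1.1 p.1.2 p.2)
    (hvper : ∀ (x : Fin N → ℝ) (ω : Ω) (y : Fin N → ℝ) (k : Fin N → ℤ),
      v x ω (y + fun i => (k i : ℝ)) = v x ω y)
    (hwper : ∀ (x : Fin N → ℝ) (ω : Ω) (y : Fin N → ℝ) (k : Fin N → ℤ),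
      w x ω (y + fun i => (k i : ℝ)) = w x ω y) :
    (∫⁻ p, ENNReal.ofReal
        |f p.1.1 p.1.2 p.2 (v p.1.1 p.1.2 p.2) - f p.1.1 p.1.2 p.2 (w p.1.1 p.1.2 p.2)|
        ∂(((volume.restrict Q).prod μ).prod (volume.restrict (Ycube N)))) ≤
      ENNReal.ofReal (4 * (N : ℝ) * c₂) *
        luxNorm (conjY Φ) (((volume.restrict Q).prod μ).prod (volume.restrict (Ycube N)))
          (fun p => (1 + Φ (2 * (1 + enorm2 (v p.1.1 p.1.2 p.2) + enorm2 (w p.1.1 p.1.2 p.2)))) /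
            (1 + enorm2 (v p.1.1 p.1.2 p.2) + enorm2 (w p.1.1 p.1.2 p.2))) *
        luxNorm Φ (((volume.restrict Q).prod μ).prod (volume.restrict (Ycube N)))
          (fun p => enorm2 (v p.1.1 p.1.2 p.2 - w p.1.1 p.1.2 p.2)) := by
  have hae {P : Ω × (Fin N → ℝ) → Prop} (hP : ∀ᵐ q ∂μ.prod volume, P q) :
      ∀ᵐ x ∂((volume.restrict Q).prod μ).prod (volume.restrict (Ycube N)), P (x.1.2, x.2) :=
    ae_prod_prod_of_ae_prod Measure.restrict_le_self.absolutelyContinuous hP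
  have hnonneg := (hae hH3).mono fun x hx lam =>
    (mul_nonneg hc₁.le (hΦ.nonneg (Real.sqrt_nonneg _))).trans (hx x.1.1 lam).1
  have hconst : 2 * c₂ ≤ 4 * (N : ℝ) * c₂ := by
    have : (1 : ℝ) ≤ N := by exact_mod_cast hN
    nlinarith
  refine (stmt6_general hΦ (euclideanSeminorm N) hc₂.le
    ((hae hH2).mono fun x hx => (hx x.1.1).convexOn) hnonneg
    ((hae hH3).mono fun x hx lam => (hx x.1.1 lam).2)
    (measurable_enorm2.comp hvmeas).aemeasurable (measurable_enorm2.comp hwmeas).aemeasurable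
    (measurable_enorm2.comp (hvmeas.sub hwmeas)).aemeasurable).trans ?_
  exact mul_le_mul_left (mul_le_mul_left (ENNReal.ofReal_le_ofReal hconst) _) _
end
end
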